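/- arXiv:math/0605045 — 2 statements merged into one kernel-verified Lean document; each statement's English description precedes it below -/
import Mathlib

section
/- Suppose the spectral parameter λ lies in a (i.e. λ is real). Then the Opdam function G_λ is real-valued and strictly positive at every point of a; consequently the Heckman–Opdam hypergeometric function F_λ is strictly positive on a. -/
open scoped BigOperators RealInnerProductSpace Classical

noncomputable section

variable {E : Type*} [NormedAddCommGroup E] [InnerProductSpace ℝ E] [FiniteDimensional ℝ E]

/-- The coroot `α∨ = 2α/|α|²`. -/
def coroot (α : E) : E := (2 / ⟪α, α⟫) • α

/-- The orthogonal reflection `r_α x = x - (α∨, x) α`. -/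
def rRefl (α : E) (x : E) : E := x - ⟪coroot α, x⟫ • α

/-- Data of an integral root system with positive subsystem and
a Weyl-invariant positive multiplicity function. -/
structure HOData (E : Type*) [NormedAddCommGroup E] [InnerProductSpace ℝ E] : Type _ where
  R : Finset E
  Rpos : Finset E
  k : E → ℝ
  k_pos : ∀ α ∈ R, 0 < k α
  root_ne_zero : ∀ α ∈ R, α ≠ 0
  pos_subset : Rpos ⊆ R
  pos_char : ∃ u : E, ∀ α ∈ R, (α ∈ Rpos ↔ 0 < ⟪α, u⟫)
  pos_or_neg : ∀ α ∈ R, α ∈ Rpos ∨ -α ∈ Rpos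
  neg_mem : ∀ α ∈ R, -α ∈ R
  integral : ∀ α ∈ R, ∀ β ∈ R, ∃ n : ℤ, ⟪coroot α, β⟫ = (n : ℝ)
  refl_mem : ∀ α ∈ R, ∀ β ∈ R, rRefl α β ∈ R
  k_inv : ∀ α ∈ R, ∀ β ∈ R, k (rRefl α β) = k β

/-- The Weyl group: the subgroup of linear isometries generated by the root reflections. -/
def weylGroup (D : HOData E) : Subgroup (E ≃ₗᵢ[ℝ] E) :=
  Subgroup.closure {w : E ≃ₗᵢ[ℝ] E | ∃ α ∈ D.R, ∀ x, w x = rRefl α x}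

/-- `ρ = (1/2) Σ_{α ∈ R⁺} k_α α`. -/
def rhoHO (D : HOData E) : E := (2:ℝ)⁻¹ • ∑ α ∈ D.Rpos, D.k α • α

/-- Regular points. -/
def HORegular (D : HOData E) (x : E) : Prop := ∀ α ∈ D.R, ⟪α, x⟫ ≠ 0

/-- The (open) positive Weyl chamber. -/
def posChamber (D : HOData E) : Set E := {x | ∀ α ∈ D.Rpos, 0 < ⟪α, x⟫}

/-- The positive indivisible roots `R₀⁺`. -/
def Rpos0 (D : HOData E) : Finset E := D.Rpos.filter (fun α => (2:ℝ)⁻¹ • α ∉ D.R)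

/-- The Opdam function `G_λ` for a real parameter `λ`: an analytic function,
normalized at `0`, satisfying the Cherednik differential-difference system. -/
def IsOpdamR (D : HOData E) (lam : E) (G : E → ℝ) : Prop :=
  AnalyticOnNhd ℝ G Set.univ ∧ G 0 = 1 ∧
  ∀ ξ x, HORegular D x →
    fderiv ℝ G x ξ =
      (∑ α ∈ D.Rpos, D.k α * ⟪α, ξ⟫ / (1 - Real.exp (-⟪α, x⟫)) * (G (rRefl α x) - G x))
      + ⟪rhoHO D + lam, ξ⟫ * G x

/-- The Opdam function `G_λ` for a complex parameter `λ = l1 + i l2 ∈ h`. -/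
def IsOpdamC (D : HOData E) (l1 l2 : E) (G : E → ℂ) : Prop :=
  AnalyticOnNhd ℝ G Set.univ ∧ G 0 = 1 ∧
  ∀ ξ x, HORegular D x →
    fderiv ℝ G x ξ =
      (∑ α ∈ D.Rpos, ((D.k α * ⟪α, ξ⟫ / (1 - Real.exp (-⟪α, x⟫)) : ℝ) : ℂ)
          * (G (rRefl α x) - G x))
      + (((⟪rhoHO D + l1, ξ⟫ : ℝ) : ℂ) + Complex.I * ((⟪l2, ξ⟫ : ℝ) : ℂ)) * G x

/-- The symmetrization `F(x) = |W|⁻¹ Σ_{w ∈ W} G(w x)` (real valued case). -/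
def Fsym (D : HOData E) [Fintype (weylGroup D)] (G : E → ℝ) (x : E) : ℝ :=
  (Fintype.card (weylGroup D) : ℝ)⁻¹ * ∑ w : weylGroup D, G (w.1 x)

/-- The symmetrization `F(x) = |W|⁻¹ Σ_{w ∈ W} G(w x)` (complex valued case). -/
def FsymC (D : HOData E) [Fintype (weylGroup D)] (G : E → ℂ) (x : E) : ℂ :=
  (Fintype.card (weylGroup D) : ℂ)⁻¹ * ∑ w : weylGroup D, G (w.1 x)

/-- `max_{w ∈ W} (w λ, x)`. -/
def maxW (D : HOData E) [Fintype (weylGroup D)] (lam x : E) : ℝ :=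
  ⨆ w : weylGroup D, ⟪w.1 lam, x⟫

/-!
Along the Euler field `ξ = x` every coefficient `k_α (α, x) / (1 - exp (-(α, x)))` of the Cherednik
system is nonnegative and extends continuously across the walls. As long as a real solution `g` is
positive on the closed ball of radius `‖x‖`, the reflected terms `g (r_α x)` can be discarded, so
that `∂_x g x ≥ c x * g x` with `c` continuous. By Grönwall's inequality along a ray, `g` cannot
vanish at a point of minimal norm among those where it is not positive, hence it is positive
everywhere. Since the system is real, this applies to `Re G + s Im G` for every real `s`, and a
complex number whose image under all these functionals is positive is a positive real.
-/

section Todd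

lemma hasDerivAt_one_sub_exp_neg (s : ℝ) :
    HasDerivAt (fun u : ℝ ↦ 1 - Real.exp (-u)) (Real.exp (-s)) s := by
  simpa using ((hasDerivAt_neg s).exp).const_sub 1

/-- The Todd function `s ↦ s / (1 - exp (-s))`, with its removable singularity at `0` filled in by
writing it as the inverse of the divided difference of `1 - exp (-s)` at `0`. -/
def toddFunction (s : ℝ) : ℝ := (dslope (fun u : ℝ ↦ 1 - Real.exp (-u)) 0 s)⁻¹

lemma toddFunction_of_ne {s : ℝ} (hs : s ≠ 0) : toddFunction s = s / (1 - Real.exp (-s)) := by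
  simp [toddFunction, dslope_of_ne _ hs, slope_def_field]

lemma toddFunction_pos (s : ℝ) : 0 < toddFunction s := by
  have hmono : StrictMono fun u : ℝ ↦ 1 - Real.exp (-u) := fun u v huv ↦ by simpa using huv
  refine inv_pos.2 ?_
  rcases eq_or_ne s 0 with rfl | hs
  · simp [dslope_same, (hasDerivAt_one_sub_exp_neg 0).deriv]
  · rw [dslope_of_ne _ hs]
    exact (hmono.strictMonoOn Set.univ).slope_pos trivial trivial hs.symm

lemma continuous_toddFunction : Continuous toddFunction := by
  refine Continuous.inv₀ ?_ fun s ↦ (inv_pos.1 (toddFunction_pos s)).ne'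
  rw [← continuousOn_univ, continuousOn_dslope Filter.univ_mem]
  exact ⟨by fun_prop, (hasDerivAt_one_sub_exp_neg 0).differentiableAt⟩

end Todd

section PositivityAlongRays

lemma pos_right_endpoint_of_mul_le_deriv {φ φ' c : ℝ → ℝ} {a b : ℝ} (hab : a < b)
    (hφ : ContinuousOn φ (Set.Icc a b))
    (hφ' : ∀ t ∈ Set.Ico a b, HasDerivWithinAt φ (φ' t) (Set.Ici t) t)
    (hc : ContinuousOn c (Set.Icc a b)) (hpos : ∀ t ∈ Set.Ico a b, 0 < φ t)
    (hle : ∀ t ∈ Set.Ico a b, c t * φ t ≤ φ' t) : 0 < φ b := by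
  obtain ⟨K, hK⟩ := isCompact_Icc.bddBelow_image hc
  have hK_le : ∀ t ∈ Set.Ico a b, -φ' t ≤ K * -φ t + 0 := fun t ht ↦ by
    have hKc : K ≤ c t := hK ⟨t, Set.Ico_subset_Icc_self ht, rfl⟩
    linarith [hle t ht, mul_le_mul_of_nonneg_right hKc (hpos t ht).le]
  have hgronwall : -φ b ≤ -φ a * Real.exp (K * (b - a)) := by
    rw [← gronwallBound_ε0]
    exact le_gronwallBound_of_liminf_deriv_right_le hφ.neg
      (fun t ht _ hr ↦ (hφ' t ht).neg.liminf_right_slope_le hr) le_rfl hK_le b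
      (Set.right_mem_Icc.2 hab.le)
  linarith [mul_pos (hpos a (Set.left_mem_Ico.2 hab)) (Real.exp_pos (K * (b - a)))]

variable {F : Type*} [NormedAddCommGroup F] [ProperSpace F]

lemma forall_pos_of_pos_on_ball_imp_pos {g : F → ℝ} (hg : Continuous g)
    (h : ∀ z, (∀ y, ‖y‖ < ‖z‖ → 0 < g y) → 0 < g z) (x : F) : 0 < g x := by
  by_contra hx
  have hclosed : IsClosed {y | g y ≤ 0} := isClosed_le hg continuous_const
  obtain ⟨z, hz, hzmin⟩ := hclosed.exists_infDist_eq_dist ⟨x, not_lt.1 hx⟩ (0 : F)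
  refine (h z fun y hy ↦ ?_).not_ge hz
  by_contra hgy
  have hymem : y ∈ {y | g y ≤ 0} := not_lt.1 hgy
  have hle := Metric.infDist_le_dist_of_mem (x := (0 : F)) hymem
  rw [hzmin, dist_zero_left, dist_zero_left] at hle
  exact hy.not_ge hle

variable [NormedSpace ℝ F]

lemma pos_of_mul_le_fderiv_self {g c : F → ℝ} (hg : Differentiable ℝ g) (hc : Continuous c)
    (h0 : 0 < g 0)
    (hle : ∀ y, (∀ y', ‖y'‖ ≤ ‖y‖ → 0 < g y') → c y * g y ≤ fderiv ℝ g y y) (x : F) :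
    0 < g x := by
  refine forall_pos_of_pos_on_ball_imp_pos hg.continuous (fun z hz ↦ ?_) x
  rcases eq_or_ne z 0 with rfl | hz0
  · exact h0
  -- In the logarithmic radial coordinate `t` the Euler field becomes `d/dt`.
  have hderiv (t : ℝ) : HasDerivAt (fun t : ℝ ↦ g (Real.exp t • z))
      (fderiv ℝ g (Real.exp t • z) (Real.exp t • z)) t :=
    (hg _).hasFDerivAt.comp_hasDerivAt t ((Real.hasDerivAt_exp t).smul_const z)
  have hball {t : ℝ} (ht : t < 0) : ‖Real.exp t • z‖ < ‖z‖ := by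
    rw [norm_smul, Real.norm_eq_abs, Real.abs_exp]
    exact mul_lt_of_lt_one_left (norm_pos_iff.2 hz0) (Real.exp_lt_one_iff.2 ht)
  have hend : 0 < g (Real.exp 0 • z) :=
    pos_right_endpoint_of_mul_le_deriv (φ := fun t ↦ g (Real.exp t • z))
      (c := fun t ↦ c (Real.exp t • z)) neg_one_lt_zero
      (fun t _ ↦ (hderiv t).continuousAt.continuousWithinAt)
      (fun t _ ↦ (hderiv t).hasDerivWithinAt) (by fun_prop) (fun t ht ↦ hz _ (hball ht.2))
      fun t ht ↦ hle _ fun y' hy' ↦ hz y' (hy'.trans_lt (hball ht.2))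
  simpa using hend

end PositivityAlongRays

lemma dense_forall_apply_ne_zero {𝕜 V ι : Type*} [NontriviallyNormedField 𝕜]
    [AddCommGroup V] [Module 𝕜 V] [TopologicalSpace V] [ContinuousAdd V] [ContinuousSMul 𝕜 V]
    {s : Finset ι} {f : ι → V →L[𝕜] 𝕜} (hf : ∀ i ∈ s, f i ≠ 0) :
    Dense {x | ∀ i ∈ s, f i x ≠ 0} := by
  have hopen (i : ι) : IsOpen {x | f i x ≠ 0} := isOpen_ne_fun (f i).continuous continuous_const
  have hdense (i : ι) (hi : i ∈ s) : Dense {x | f i x ≠ 0} := by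
    have hker : (f i).ker ≠ ⊤ := fun h ↦
      hf i hi (ContinuousLinearMap.coe_injective (LinearMap.ker_eq_top.1 h))
    refine interior_eq_empty_iff_dense_compl.1 (Set.not_nonempty_iff_eq_empty.1 fun h ↦ hker ?_)
    exact Submodule.eq_top_of_nonempty_interior' _ h
  have h := (s.finite_toSet.image fun i ↦ {x | f i x ≠ 0}).dense_sInter
    (by rintro _ ⟨i, -, rfl⟩; exact hopen i) (by rintro _ ⟨i, hi, rfl⟩; exact hdense i hi)
  convert h using 1
  ext x
  simp

section RadialCherednik

variable {V : Type*} [NormedAddCommGroup V] [InnerProductSpace ℝ V]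

lemma rRefl_eq_reflection (α x : V) : rRefl α x = (ℝ ∙ α)ᗮ.reflection x := by
  rw [Submodule.reflection_orthogonal_apply, Submodule.reflection_singleton_apply, rRefl, coroot,
    real_inner_smul_left, real_inner_self_eq_norm_sq]
  simp only [RCLike.ofReal_real_eq_id, id]
  module

lemma norm_rRefl (α x : V) : ‖rRefl α x‖ = ‖x‖ := by
  rw [rRefl_eq_reflection, LinearIsometryEquiv.norm_map]

lemma continuous_rRefl (α : V) : Continuous (rRefl α) := by
  unfold rRefl
  fun_prop

lemma rRefl_mem {S : Submodule ℝ V} {α x : V} (hα : α ∈ S) (hx : x ∈ S) : rRefl α x ∈ S :=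
  S.sub_mem hx (S.smul_mem _ hα)

variable {Z : Type*} [NormedAddCommGroup Z] [NormedSpace ℝ Z]

/-- `G` solves the component of the Cherednik system along the Euler field `ξ = x`, where
`A` is the set of positive roots and `μ = ρ + λ`. Writing the coefficients with the Todd function
makes the equation meaningful on the walls `(α, x) = 0` as well. -/
def SolvesRadialCherednik (A : Finset V) (k : V → ℝ) (μ : V) (G : V → Z) : Prop :=
  ∀ x, fderiv ℝ G x x =
    ∑ α ∈ A, (k α * toddFunction ⟪α, x⟫) • (G (rRefl α x) - G x) + ⟪μ, x⟫ • G x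

variable {A : Finset V} {k : V → ℝ} {μ : V}

lemma solvesRadialCherednik_of_regular (hA : ∀ α ∈ A, α ≠ 0) {G : V → Z} (hG : ContDiff ℝ 1 G)
    (heq : ∀ x, (∀ α ∈ A, ⟪α, x⟫ ≠ 0) → fderiv ℝ G x x =
      ∑ α ∈ A, (k α * ⟪α, x⟫ / (1 - Real.exp (-⟪α, x⟫))) • (G (rRefl α x) - G x)
        + ⟪μ, x⟫ • G x) :
    SolvesRadialCherednik A k μ G := by
  have hdense : Dense {x | ∀ α ∈ A, ⟪α, x⟫ ≠ 0} :=
    dense_forall_apply_ne_zero (f := innerSL ℝ) fun α hα h ↦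
      hA α hα (inner_self_eq_zero.1 (DFunLike.congr_fun h α))
  have hleft : Continuous fun x ↦ fderiv ℝ G x x :=
    (hG.continuous_fderiv one_ne_zero).clm_apply continuous_id
  have hright : Continuous fun x ↦
      ∑ α ∈ A, (k α * toddFunction ⟪α, x⟫) • (G (rRefl α x) - G x) + ⟪μ, x⟫ • G x := by
    have hGc := hG.continuous
    have htodd := continuous_toddFunction
    have hrefl := continuous_rRefl (V := V)
    fun_prop
  refine congrFun (hleft.ext_on hdense hright fun x hx ↦ ?_)
  refine (heq x hx).trans (congrArg (· + ⟪μ, x⟫ • G x) (Finset.sum_congr rfl fun α hα ↦ ?_))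
  rw [toddFunction_of_ne (hx α hα), mul_div_assoc]

namespace SolvesRadialCherednik

lemma clm_comp {Z' : Type*} [NormedAddCommGroup Z'] [NormedSpace ℝ Z'] {G : V → Z}
    (h : SolvesRadialCherednik A k μ G) (hG : Differentiable ℝ G) (L : Z →L[ℝ] Z') :
    SolvesRadialCherednik A k μ fun x ↦ L (G x) := fun x ↦ by
  have hfderiv : fderiv ℝ (fun x ↦ L (G x)) x = L.comp (fderiv ℝ G x) :=
    (L.hasFDerivAt.comp x (hG x).hasFDerivAt).fderiv
  rw [hfderiv, ContinuousLinearMap.comp_apply, h x]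
  simp only [map_add, map_sum, map_smul, map_sub]

lemma mul_le_fderiv_self {g : V → ℝ} (h : SolvesRadialCherednik A k μ g)
    (hk : ∀ α ∈ A, 0 ≤ k α) {x : V} (hpos : ∀ α ∈ A, 0 ≤ g (rRefl α x)) :
    (⟪μ, x⟫ - ∑ α ∈ A, k α * toddFunction ⟪α, x⟫) * g x ≤ fderiv ℝ g x x := by
  have hdrop : ∑ α ∈ A, k α * toddFunction ⟪α, x⟫ * -g x ≤
      ∑ α ∈ A, k α * toddFunction ⟪α, x⟫ * (g (rRefl α x) - g x) := by
    refine Finset.sum_le_sum fun α hα ↦ mul_le_mul_of_nonneg_left ?_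
      (mul_nonneg (hk α hα) (toddFunction_pos _).le)
    linarith [hpos α hα]
  rw [← Finset.sum_mul] at hdrop
  simp only [h x, smul_eq_mul]
  linarith

theorem pos {g : V → ℝ} (h : SolvesRadialCherednik A k μ g) (hg : Differentiable ℝ g)
    (hk : ∀ α ∈ A, 0 ≤ k α) (h0 : 0 < g 0) (x : V) : 0 < g x := by
  -- Restricting to the span of the roots and `x` makes closed balls compact.
  let S : Submodule ℝ V := Submodule.span ℝ (insert x A : Set V)
  have : FiniteDimensional ℝ S :=
    FiniteDimensional.span_of_finite ℝ (A.finite_toSet.insert x)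
  have hAS {α : V} (hα : α ∈ A) : α ∈ S := Submodule.subset_span (.inr hα)
  let gS : S → ℝ := fun y ↦ g y
  have hgS (y : S) : HasFDerivAt gS ((fderiv ℝ g y).comp S.subtypeL) y :=
    (hg y).hasFDerivAt.comp y S.subtypeL.hasFDerivAt
  have hcont : Continuous fun y : S ↦ ⟪μ, y⟫ - ∑ α ∈ A, k α * toddFunction ⟪α, y⟫ := by
    have htodd := continuous_toddFunction
    fun_prop
  refine pos_of_mul_le_fderiv_self (g := gS) (fun y ↦ (hgS y).differentiableAt) hcont h0
    (fun y hy ↦ ?_) ⟨x, Submodule.subset_span (.inl rfl)⟩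
  rw [(hgS y).fderiv]
  exact h.mul_le_fderiv_self hk fun α hα ↦
    (hy ⟨rRefl α y, rRefl_mem (hAS hα) y.2⟩ (norm_rRefl α (y : V)).le).le

end SolvesRadialCherednik

end RadialCherednik

section ComplexSolutions

open scoped ComplexOrder

lemma complex_pos_of_forall_re_add_mul_im_pos {z : ℂ} (h : ∀ s : ℝ, 0 < z.re + s * z.im) :
    0 < z := by
  refine Complex.pos_iff.2 ⟨by simpa using h 0, ?_⟩
  by_contra him
  have hvanish := h (-z.re / z.im)
  rw [div_mul_cancel₀ _ (Ne.symm him), add_neg_cancel] at hvanish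
  exact hvanish.false

variable {V : Type*} [NormedAddCommGroup V] [InnerProductSpace ℝ V]

theorem statement0_general {A : Finset V} (hA : ∀ α ∈ A, α ≠ 0) {k : V → ℝ}
    (hk : ∀ α ∈ A, 0 ≤ k α) {μ : V} {G : V → ℂ} (hG : ContDiff ℝ 1 G) (h0 : 0 < G 0)
    (heq : ∀ x, (∀ α ∈ A, ⟪α, x⟫ ≠ 0) → fderiv ℝ G x x =
      ∑ α ∈ A, (k α * ⟪α, x⟫ / (1 - Real.exp (-⟪α, x⟫))) • (G (rRefl α x) - G x)
        + ⟪μ, x⟫ • G x) (x : V) : 0 < G x := by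
  refine complex_pos_of_forall_re_add_mul_im_pos fun s ↦ ?_
  have hdiff : Differentiable ℝ G := hG.differentiable one_ne_zero
  let L : ℂ →L[ℝ] ℝ := Complex.reCLM + s • Complex.imCLM
  have hL0 : 0 < L (G 0) := by
    obtain ⟨hre, him⟩ := Complex.pos_iff.1 h0
    simpa [L, ← him] using hre
  exact ((solvesRadialCherednik_of_regular hA hG heq).clm_comp hdiff L).pos
    (L.differentiable.comp hdiff) hk hL0 x

lemma HORegular_of_forall_mem_Rpos {D : HOData V} {x : V} (h : ∀ α ∈ D.Rpos, ⟪α, x⟫ ≠ 0) :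
    HORegular D x := fun α hα ↦
  (D.pos_or_neg α hα).elim (h α) fun hneg ↦ by simpa using h (-α) hneg

theorem IsOpdamC.pos {D : HOData V} {lam : V} {G : V → ℂ} (hG : IsOpdamC D lam 0 G) (x : V) :
    0 < G x := by
  obtain ⟨hana, h0, heq⟩ := hG
  refine statement0_general (fun α hα ↦ D.root_ne_zero α (D.pos_subset hα))
    (fun α hα ↦ (D.k_pos α (D.pos_subset hα)).le) (μ := rhoHO D + lam)
    (contDiffOn_univ.1 (hana.contDiffOn uniqueDiffOn_univ)) (h0 ▸ one_pos) (fun y hy ↦ ?_) x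
  simpa using heq y y (HORegular_of_forall_mem_Rpos hy)

lemma FsymC_pos {D : HOData V} [Fintype (weylGroup D)] {G : V → ℂ} (hG : ∀ x, 0 < G x) (x : V) :
    0 < FsymC D G x :=
  mul_pos (inv_pos.2 (Nat.cast_pos.2 Fintype.card_pos))
    (Finset.sum_pos (fun w _ ↦ hG (w.1 x)) Finset.univ_nonempty)

end ComplexSolutions

/-- for a real spectral parameter `λ ∈ a`, the Opdam function `G_λ` is
real-valued and strictly positive on `a`; consequently `F_λ` is strictly positive on `a`. -/
theorem statement0 (D : HOData E) [Fintype (weylGroup D)] (lam : E) (G : E → ℂ)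
    (hG : IsOpdamC D lam 0 G) :
    (∀ x : E, (G x).im = 0 ∧ 0 < (G x).re) ∧
    (∀ x : E, (FsymC D G x).im = 0 ∧ 0 < (FsymC D G x).re) :=
  ⟨fun x ↦ (Complex.pos_iff.1 (hG.pos x)).symm.imp_left Eq.symm,
    fun x ↦ (Complex.pos_iff.1 (FsymC_pos hG.pos x)).symm.imp_left Eq.symm⟩
end
end

section
/- There exist constants C ≥ c > 0 such that for every x in the closed positive Weyl chamber ā₊, c · e^{−(ρ,x)} Π_{α∈R₀⁺} (1 + (α,x)) ≤ F_0(x) ≤ C · e^{−(ρ,x)} Π_{α∈R₀⁺} (1 + (α,x)). -/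
open scoped BigOperators RealInnerProductSpace Classical

noncomputable section

variable {E : Type*} [NormedAddCommGroup E] [InnerProductSpace ℝ E] [FiniteDimensional ℝ E]

/-!
Pull the Opdam function `G` back by the elements `w` of the Weyl group and put
`f_w(x) = e^⟪ρ, x⟫ G(w x)` on the positive chamber. The Cherednik system becomes a linear
differential system for `(f_w)`, in which `f_w` is coupled to the components `f_{w r_β}` with
coefficients that are nonnegative in the directions of the chamber. The diagonal terms are removed
by multiplying with the Weyl denominator `∏ (1 - e^{-⟪β, x⟫})^{k_β}`. All components are therefore
positive, and comparison with sub- and supersolutions is possible. It remains to see that `∑ f_w`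
is comparable to `∏ (1 + ⟪α, x⟫)`; since `∑ f_w` changes by a bounded factor under a bounded
shift, one may stay away from the walls.

* Lower bound: the coupling of `f_w` to `f_{w r_β}` is at least `k_β ⟪β, ξ⟫` whenever `w β` is
  positive. Ordering the positive indivisible roots by a generic slope, each of them is removed in
  turn from the set of roots that `w` keeps positive; integrating along this chain of reflections
  gives one factor `⟪α, x⟫` per root.
* Upper bound: `c_w e^{-K Φ(x)} ∏ (1 + ⟪δ, x⟫)`, the product over the positive indivisible roots
  `δ` that `w` keeps positive, is a supersolution. The bounded potential `Φ` absorbs the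
  exponentially small part of the coupling. The rest couples `w` only to `w r_β` with `w β`
  positive; then `⟪u, w u⟫` drops for `u` in the chamber, so weights `c_w` that decrease quickly
  along this order make it small.
-/

variable {V : Type*} [NormedAddCommGroup V] [InnerProductSpace ℝ V]

section Comparison

open scoped Topology

lemma le_of_hasDerivAt_nonneg {f f' : ℝ → ℝ} {a b : ℝ} (hab : a ≤ b)
    (hf : ∀ t ∈ Set.Icc a b, HasDerivAt f (f' t) t) (hf' : ∀ t ∈ Set.Ioo a b, 0 ≤ f' t) :
    f a ≤ f b := by
  rw [← interior_Icc] at hf'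
  exact monotoneOn_of_hasDerivWithinAt_nonneg (convex_Icc a b)
    (fun t ht => (hf t ht).continuousAt.continuousWithinAt)
    (fun t ht => (hf t (interior_subset ht)).hasDerivWithinAt) hf'
    (Set.left_mem_Icc.2 hab) (Set.right_mem_Icc.2 hab) hab

/- The set where every `d i` is at least its initial value is closed; it is also open to the
right, because near a time where all components are positive all of them are monotone. -/
lemma forall_pos_of_hasDerivAt_nonneg {ι : Type*} [Finite ι] {d d' : ι → ℝ → ℝ} {a b : ℝ}
    (hd : ∀ i, ∀ t ∈ Set.Icc a b, HasDerivAt (d i) (d' i t) t)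
    (hd' : ∀ t ∈ Set.Icc a b, (∀ j, 0 ≤ d j t) → ∀ i, 0 ≤ d' i t)
    (hpos : ∀ i, 0 < d i a) : ∀ t ∈ Set.Icc a b, ∀ i, 0 < d i t := by
  have hclosed : IsClosed ({t | ∀ i, d i a ≤ d i t} ∩ Set.Icc a b) := by
    have hcont : ∀ i, ContinuousOn (d i) (Set.Icc a b) := fun i t ht =>
      (hd i t ht).continuousAt.continuousWithinAt
    rw [Set.inter_comm]
    exact (continuousOn_pi.2 hcont).preimage_isClosed_of_isClosed isClosed_Icc
      (isClosed_Ici (a := fun i => d i a))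
  refine fun t ht i => (hpos i).trans_le (hclosed.Icc_subset_of_forall_mem_nhdsWithin
    (fun _ => le_rfl) (fun s hs => ?_) ht i)
  have hs' : s ∈ Set.Icc a b := Set.Ico_subset_Icc_self hs.2
  have hnear : ∀ᶠ r in 𝓝 s, ∀ j, 0 < d j r :=
    Filter.eventually_all.2 fun j => (hd j s hs').continuousAt.eventually_const_lt
      ((hpos j).trans_le (hs.1 j))
  obtain ⟨ε, hε, hball⟩ := Metric.eventually_nhds_iff.1 hnear
  filter_upwards [Ioo_mem_nhdsGT (lt_min (lt_add_of_pos_right s hε) hs.2.2)] with r hr j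
  have hsub : Set.Icc s r ⊆ Set.Icc a b :=
    Set.Icc_subset_Icc hs'.1 (hr.2.le.trans (min_le_right _ _))
  refine (hs.1 j).trans (le_of_hasDerivAt_nonneg hr.1.le (fun q hq => hd j q (hsub hq))
    fun q hq => hd' q (hsub (Set.Ioo_subset_Icc_self hq)) (fun i => (hball ?_ i).le) j)
  rw [Real.dist_eq, abs_lt]
  constructor <;> linarith [hq.1, hq.2, hr.2, min_le_left (s + ε) b]

lemma hasDerivAt_add_smul_of_hasLineDerivAt {f : V → ℝ} {f' t : ℝ} {x ξ : V}
    (h : HasLineDerivAt ℝ f f' (x + t • ξ) ξ) : HasDerivAt (fun s => f (x + s • ξ)) f' t := by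
  have := HasDerivAt.comp_sub_const t t (f := fun s => f (x + t • ξ + s • ξ))
    (f' := f') (by rw [sub_self]; exact h)
  simpa only [add_assoc, ← add_smul, add_sub_cancel] using this

lemma hasDerivAt_inner_add_smul (α x ξ : V) (t : ℝ) :
    HasDerivAt (fun s : ℝ => ⟪α, x + s • ξ⟫) ⟪α, ξ⟫ t := by
  simpa only [inner_add_right, real_inner_smul_right] using
    (hasDerivAt_mul_const ⟪α, ξ⟫).const_add ⟪α, x⟫

end Comparison

section Reflection

lemma inner_coroot_left (α x : V) : ⟪coroot α, x⟫ = 2 / ⟪α, α⟫ * ⟪α, x⟫ := by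
  simp [coroot, inner_smul_left]

lemma inner_rRefl_right (α x y : V) :
    ⟪y, rRefl α x⟫ = ⟪y, x⟫ - 2 / ⟪α, α⟫ * ⟪α, x⟫ * ⟪y, α⟫ := by
  simp [rRefl, inner_sub_right, inner_smul_right, inner_coroot_left]

lemma map_rRefl (w : V ≃ₗᵢ[ℝ] V) (α x : V) : w (rRefl α x) = rRefl (w α) (w x) := by
  simp [rRefl, inner_coroot_left]

lemma reflection_orthogonal_singleton_eq_rRefl (α x : V) :
    (ℝ ∙ α)ᗮ.reflection x = rRefl α x := by
  rw [Submodule.reflection_orthogonal_apply, Submodule.reflection_singleton_apply, rRefl,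
    inner_coroot_left, real_inner_self_eq_norm_sq]
  simp only [RCLike.ofReal_real_eq_id, id_eq]
  module

lemma rRefl_rRefl (α x : V) : rRefl α (rRefl α x) = x := by
  simp only [← reflection_orthogonal_singleton_eq_rRefl, Submodule.reflection_reflection]

lemma rRefl_self (α : V) : rRefl α α = -α := by
  rw [← reflection_orthogonal_singleton_eq_rRefl,
    Submodule.reflection_orthogonalComplement_singleton_eq_neg]

lemma rRefl_smul_left {c : ℝ} (hc : c ≠ 0) (α x : V) : rRefl (c • α) x = rRefl α x := by
  simp only [← reflection_orthogonal_singleton_eq_rRefl,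
    Submodule.span_singleton_smul_eq hc.isUnit]

lemma rRefl_neg_left (α x : V) : rRefl (-α) x = rRefl α x := by
  simpa using rRefl_smul_left (neg_ne_zero.2 one_ne_zero) α x

lemma inner_rRefl_left (α x y : V) : ⟪rRefl α x, y⟫ = ⟪x, rRefl α y⟫ := by
  rw [← reflection_orthogonal_singleton_eq_rRefl, LinearIsometryEquiv.inner_map_eq_flip,
    Submodule.reflection_symm, reflection_orthogonal_singleton_eq_rRefl]

end Reflection

namespace HOData

section WeylGroup

variable (D : HOData V)

lemma neg_mem_iff {α : V} : -α ∈ D.R ↔ α ∈ D.R :=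
  ⟨fun h => by simpa using D.neg_mem _ h, D.neg_mem α⟩

lemma rRefl_mem_iff {α β : V} (hα : α ∈ D.R) : rRefl α β ∈ D.R ↔ β ∈ D.R :=
  ⟨fun h => by simpa only [rRefl_rRefl] using D.refl_mem α hα _ h, D.refl_mem α hα β⟩

lemma k_neg {α : V} (hα : α ∈ D.R) : D.k (-α) = D.k α := by
  rw [← rRefl_self, D.k_inv α hα α hα]

lemma weyl_mem_iff (w : weylGroup D) {α : V} : w.1 α ∈ D.R ↔ α ∈ D.R := by
  obtain ⟨w, hw⟩ := w
  induction hw using Subgroup.closure_induction generalizing α with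
  | mem w h =>
    obtain ⟨β, hβ, h⟩ := h
    exact (h α).symm ▸ D.rRefl_mem_iff hβ
  | one => exact Iff.rfl
  | mul v w _ _ hv hw => exact hv.trans hw
  | inv w _ hw =>
    rw [← hw]
    exact iff_of_eq (congrArg (· ∈ D.R) (w.apply_symm_apply α))

lemma k_weyl (w : weylGroup D) {α : V} (hα : α ∈ D.R) : D.k (w.1 α) = D.k α := by
  obtain ⟨w, hw⟩ := w
  induction hw using Subgroup.closure_induction generalizing α with
  | mem w h =>
    obtain ⟨β, hβ, h⟩ := h
    exact (h α).symm ▸ D.k_inv β hβ α hα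
  | one => rfl
  | mul v w _ hw' hv hw => exact (hv ((D.weyl_mem_iff ⟨w, hw'⟩).2 hα)).trans (hw hα)
  | inv w hw' hw =>
    exact (hw ((D.weyl_mem_iff ⟨w, hw'⟩⁻¹).2 hα)).symm.trans
      (congrArg D.k (w.apply_symm_apply α))

lemma weyl_inv_apply (w : weylGroup D) (x : V) : w.1 ((w⁻¹).1 x) = x :=
  w.1.apply_symm_apply x

lemma weyl_apply_inv (w : weylGroup D) (x : V) : (w⁻¹).1 (w.1 x) = x :=
  w.1.symm_apply_apply x

/-- The reflection `r_α` as an element of the Weyl group; the identity if `α` is not a root. -/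
def weylRefl (α : V) : weylGroup D :=
  if h : α ∈ D.R then
    ⟨(ℝ ∙ α)ᗮ.reflection,
      Subgroup.subset_closure ⟨α, h, reflection_orthogonal_singleton_eq_rRefl α⟩⟩
  else 1

variable {D}

lemma weylRefl_apply {α : V} (hα : α ∈ D.R) (x : V) : (D.weylRefl α).1 x = rRefl α x := by
  simp [weylRefl, hα, reflection_orthogonal_singleton_eq_rRefl]

lemma mul_weylRefl_apply {α : V} (hα : α ∈ D.R) (w : weylGroup D) (x : V) :
    (w * D.weylRefl α).1 x = w.1 (rRefl α x) :=
  congrArg w.1 (weylRefl_apply hα x)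

lemma mul_weylRefl_mul_weylRefl {α : V} (hα : α ∈ D.R) (w : weylGroup D) :
    w * D.weylRefl α * D.weylRefl α = w := by
  ext x
  rw [mul_weylRefl_apply hα, mul_weylRefl_apply hα, rRefl_rRefl]

end WeylGroup

section PosChamber

variable {D : HOData V}

variable (D) in
lemma exists_one_le_inner : ∃ u : V, ∀ α ∈ D.Rpos, 1 ≤ ⟪α, u⟫ := by
  obtain ⟨u, hu⟩ := D.pos_char
  have hpos : ∀ α ∈ D.Rpos, 0 < ⟪α, u⟫ := fun α hα => (hu α (D.pos_subset hα)).1 hα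
  refine ⟨(∑ β ∈ D.Rpos, ⟪β, u⟫⁻¹) • u, fun α hα => ?_⟩
  rw [inner_smul_right, ← inv_mul_cancel₀ (hpos α hα).ne']
  gcongr
  · exact (hpos α hα).le
  · exact Finset.single_le_sum (f := fun β => ⟪β, u⟫⁻¹)
      (fun β hβ => inv_nonneg.2 (hpos β hβ).le) hα

variable (D) in
lemma posChamber_nonempty : (posChamber D).Nonempty :=
  let ⟨u, hu⟩ := D.exists_one_le_inner
  ⟨u, fun α hα => one_pos.trans_le (hu α hα)⟩

lemma add_mem_posChamber {x y : V} (hx : x ∈ posChamber D) (hy : y ∈ posChamber D) :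
    x + y ∈ posChamber D := fun α hα => by
  rw [inner_add_right]
  exact add_pos (hx α hα) (hy α hα)

lemma smul_mem_posChamber {x : V} (hx : x ∈ posChamber D) {t : ℝ} (ht : 0 < t) :
    t • x ∈ posChamber D := fun α hα => by
  rw [inner_smul_right]
  exact mul_pos ht (hx α hα)

lemma add_smul_mem_posChamber {x y : V} (hx : x ∈ posChamber D) (hy : y ∈ posChamber D) {t : ℝ}
    (ht : 0 ≤ t) : x + t • y ∈ posChamber D := by
  rcases ht.eq_or_lt with rfl | ht
  · simpa only [zero_smul, add_zero] using hx
  · exact add_mem_posChamber hx (smul_mem_posChamber hy ht)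

lemma neg_mem_Rpos_iff {α : V} (hα : α ∈ D.R) : -α ∈ D.Rpos ↔ α ∉ D.Rpos := by
  obtain ⟨u, hu⟩ := D.posChamber_nonempty
  refine ⟨fun h h' => ?_, (D.pos_or_neg α hα).resolve_left⟩
  linarith [hu α h', hu _ h, inner_neg_left (𝕜 := ℝ) α u]

lemma mul_weylRefl_apply_self_mem_Rpos {γ : V} (hγ : γ ∈ D.R) (w : weylGroup D) :
    (w * D.weylRefl γ).1 γ ∈ D.Rpos ↔ w.1 γ ∉ D.Rpos := by
  rw [mul_weylRefl_apply hγ, rRefl_self, map_neg, neg_mem_Rpos_iff ((D.weyl_mem_iff w).2 hγ)]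

lemma inner_neg_of_notMem_Rpos {x : V} (hx : x ∈ posChamber D) {α : V} (hα : α ∈ D.R)
    (h : α ∉ D.Rpos) : ⟪α, x⟫ < 0 := by
  simpa only [inner_neg_left, Left.neg_pos_iff] using hx _ ((neg_mem_Rpos_iff hα).2 h)

lemma mem_Rpos_iff_inner_pos {x : V} (hx : x ∈ posChamber D) {α : V} (hα : α ∈ D.R) :
    α ∈ D.Rpos ↔ 0 < ⟪α, x⟫ :=
  ⟨hx α, fun h => by_contra fun h' => (inner_neg_of_notMem_Rpos hx hα h').not_gt h⟩

lemma two_smul_mem_Rpos_iff {α : V} (h : α ∈ D.R) (h₂ : (2 : ℝ) • α ∈ D.R) :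
    (2 : ℝ) • α ∈ D.Rpos ↔ α ∈ D.Rpos := by
  obtain ⟨u, hu⟩ := D.posChamber_nonempty
  rw [mem_Rpos_iff_inner_pos hu h, mem_Rpos_iff_inner_pos hu h₂, real_inner_smul_left]
  simp only [Nat.ofNat_pos, mul_pos_iff_of_pos_left]

lemma regular_weyl {x : V} (hx : x ∈ posChamber D) (w : weylGroup D) :
    HORegular D (w.1 x) := by
  intro α hα
  rw [← D.weyl_inv_apply w α, LinearIsometryEquiv.inner_map_map]
  by_cases h : (w⁻¹).1 α ∈ D.Rpos
  · exact (hx _ h).ne'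
  · exact (inner_neg_of_notMem_Rpos hx ((D.weyl_mem_iff w⁻¹).2 hα) h).ne

lemma mem_Rpos0 {α : V} : α ∈ Rpos0 D ↔ α ∈ D.Rpos ∧ (2 : ℝ)⁻¹ • α ∉ D.R := by
  simp [Rpos0]

lemma Rpos0_subset_Rpos : Rpos0 D ⊆ D.Rpos := Finset.filter_subset _ _

lemma Rpos0_subset : Rpos0 D ⊆ D.R := Rpos0_subset_Rpos.trans D.pos_subset

/-- The positive one among the roots `α` and `-α`. -/
def posRep (D : HOData V) (α : V) : V := if α ∈ D.Rpos then α else -α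

lemma posRep_mem_Rpos {α : V} (hα : α ∈ D.R) : D.posRep α ∈ D.Rpos := by
  unfold posRep
  split_ifs with h
  exacts [h, (neg_mem_Rpos_iff hα).2 h]

lemma posRep_weyl_mem_Rpos0 (w : weylGroup D) {α : V} (hα : α ∈ Rpos0 D) :
    D.posRep (w.1 α) ∈ Rpos0 D := by
  refine mem_Rpos0.2 ⟨posRep_mem_Rpos ((D.weyl_mem_iff w).2 (Rpos0_subset hα)), ?_⟩
  unfold posRep
  split_ifs
  · rw [← map_smul, D.weyl_mem_iff]
    exact (mem_Rpos0.1 hα).2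
  · rw [smul_neg, D.neg_mem_iff, ← map_smul, D.weyl_mem_iff]
    exact (mem_Rpos0.1 hα).2

lemma posRep_weyl_inv_posRep_weyl (w : weylGroup D) {α : V} (hα : α ∈ D.Rpos) :
    D.posRep ((w⁻¹).1 (D.posRep (w.1 α))) = α := by
  have hα' : -α ∉ D.Rpos := (neg_mem_Rpos_iff (D.pos_subset hα)).not_left.2 hα
  by_cases h : w.1 α ∈ D.Rpos
  · simp only [posRep, if_pos h, weyl_apply_inv, if_pos hα]
  · simp only [posRep, if_neg h, map_neg, weyl_apply_inv, if_neg hα', neg_neg]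

@[to_additive]
lemma prod_posRep_weyl {M : Type*} [CommMonoid M] {S : Finset V} (hS : S ⊆ D.Rpos)
    (hmaps : ∀ w : weylGroup D, ∀ α ∈ S, D.posRep (w.1 α) ∈ S) (w : weylGroup D) (g : V → M) :
    ∏ α ∈ S, g (D.posRep (w.1 α)) = ∏ α ∈ S, g α :=
  Finset.prod_nbij' (fun α => D.posRep (w.1 α)) (fun α => D.posRep ((w⁻¹).1 α))
    (hmaps w) (hmaps w⁻¹) (fun _ hα => posRep_weyl_inv_posRep_weyl w (hS hα))
    (fun _ hα => by simpa only [inv_inv] using posRep_weyl_inv_posRep_weyl w⁻¹ (hS hα))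
    (fun _ _ => rfl)

lemma sum_Rpos_posRep_weyl (w : weylGroup D) (g : V → ℝ) :
    ∑ α ∈ D.Rpos, g (D.posRep (w.1 α)) = ∑ α ∈ D.Rpos, g α :=
  sum_posRep_weyl subset_rfl
    (fun w _ hα => posRep_mem_Rpos ((D.weyl_mem_iff w).2 (D.pos_subset hα))) w g

lemma prod_Rpos0_posRep_weyl (w : weylGroup D) (g : V → ℝ) :
    ∏ α ∈ Rpos0 D, g (D.posRep (w.1 α)) = ∏ α ∈ Rpos0 D, g α :=
  prod_posRep_weyl Rpos0_subset_Rpos (fun w _ => posRep_weyl_mem_Rpos0 w) w g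

end PosChamber

section Indivisible

variable {D : HOData V}

lemma eq_half_or_one_or_two_of_smul_mem {α : V} (hα : α ∈ D.R) {c : ℝ} (hc : 0 < c)
    (h : c • α ∈ D.R) : c = 2⁻¹ ∨ c = 1 ∨ c = 2 := by
  have h0 : ⟪α, α⟫ ≠ 0 := inner_self_ne_zero.2 (D.root_ne_zero α hα)
  obtain ⟨n, hn⟩ := D.integral α hα _ h
  obtain ⟨m, hm⟩ := D.integral _ h α hα
  have hn : (n : ℝ) = 2 * c := by
    rw [← hn, inner_coroot_left, real_inner_smul_right]
    field_simp
  have hm : c * m = 2 := by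
    rw [← hm, inner_coroot_left, real_inner_smul_left, real_inner_smul_left,
      real_inner_smul_right]
    field_simp
  have hnm : n * m = 4 := by
    exact_mod_cast (by rw [hn]; linarith : (n : ℝ) * m = 4)
  have hn_pos : 0 < n := by exact_mod_cast (by linarith : (0 : ℝ) < n)
  have hn_le : n ≤ 4 := Int.le_of_dvd (by norm_num) ⟨m, hnm.symm⟩
  have hn_cases : n = 1 ∨ n = 2 ∨ n = 4 := by
    interval_cases n <;> omega
  rcases hn_cases with rfl | rfl | rfl <;> norm_num at hn
  exacts [.inl (by linarith), .inr (.inl (by linarith)), .inr (.inr (by linarith))]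

lemma eq_of_smul_mem_Rpos0 {α : V} (hα : α ∈ Rpos0 D) {c : ℝ} (hc : 0 < c)
    (h : c • α ∈ Rpos0 D) : c • α = α := by
  rcases eq_half_or_one_or_two_of_smul_mem (Rpos0_subset hα) hc (Rpos0_subset h)
    with rfl | rfl | rfl
  · exact absurd (Rpos0_subset h) (mem_Rpos0.1 hα).2
  · exact one_smul ℝ α
  · refine absurd ?_ (mem_Rpos0.1 h).2
    simpa only [inv_smul_smul₀ (two_ne_zero (α := ℝ))] using Rpos0_subset hα

/-- The positive indivisible roots that `w` keeps positive. -/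
def posSet (D : HOData V) (w : weylGroup D) : Finset V := {δ ∈ Rpos0 D | w.1 δ ∈ D.Rpos}

lemma mem_posSet {w : weylGroup D} {δ : V} : δ ∈ posSet D w ↔ δ ∈ Rpos0 D ∧ w.1 δ ∈ D.Rpos :=
  Finset.mem_filter

lemma posSet_one : posSet D 1 = Rpos0 D :=
  Finset.filter_true_of_mem fun _ hδ => Rpos0_subset_Rpos hδ

lemma exists_mem_posSet {w : weylGroup D} {β : V} (hβ : β ∈ D.Rpos) (hw : w.1 β ∈ D.Rpos) :
    ∃ γ ∈ posSet D w, β = γ ∨ β = (2 : ℝ) • γ := by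
  by_cases h : (2 : ℝ)⁻¹ • β ∈ D.R
  · obtain ⟨γ, rfl⟩ : ∃ γ, β = (2 : ℝ) • γ := ⟨_, (smul_inv_smul₀ two_ne_zero β).symm⟩
    rw [inv_smul_smul₀ two_ne_zero] at h
    have hγ := (two_smul_mem_Rpos_iff h (D.pos_subset hβ)).1 hβ
    have hwγ : w.1 γ ∈ D.Rpos := by
      rw [map_smul] at hw
      exact (two_smul_mem_Rpos_iff ((D.weyl_mem_iff w).2 h) (D.pos_subset hw)).1 hw
    refine ⟨γ, mem_posSet.2 ⟨mem_Rpos0.2 ⟨hγ, fun hhalf => ?_⟩, hwγ⟩, .inr rfl⟩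
    have h4 : (4 : ℝ) • (2 : ℝ)⁻¹ • γ ∈ D.R := by
      rw [smul_smul]
      norm_num
      exact D.pos_subset hβ
    rcases eq_half_or_one_or_two_of_smul_mem hhalf (by norm_num) h4 with h | h | h <;>
      norm_num at h
  · exact ⟨β, mem_posSet.2 ⟨mem_Rpos0.2 ⟨hβ, h⟩, hw⟩, .inl rfl⟩

end Indivisible

/-- The Bose–Einstein coefficient `1 / (e^s - 1)`, the off-diagonal part of the coefficients
`1 / (1 - e^{-s})` and `1 / (1 - e^s)` of the Cherednik system. -/
def bose (s : ℝ) : ℝ := (Real.exp s - 1)⁻¹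

lemma bose_pos {s : ℝ} (hs : 0 < s) : 0 < bose s :=
  inv_pos.2 (sub_pos.2 (Real.one_lt_exp_iff.2 hs))

lemma inv_one_sub_exp (s : ℝ) : (1 - Real.exp s)⁻¹ = -bose s := by
  rw [bose, neg_inv, neg_sub]

lemma inv_one_sub_exp_neg {s : ℝ} (hs : s ≠ 0) : (1 - Real.exp (-s))⁻¹ = bose s + 1 := by
  have h : Real.exp s - 1 ≠ 0 := sub_ne_zero.2 (by simpa using hs)
  rw [bose, Real.exp_neg]
  field_simp
  ring

section System

variable {D : HOData V}

/-- Continuous functions `G` with `G 0 > 0` solving, at regular points, the Cherednik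
differential-difference system with spectral parameter `0`. -/
structure IsCherednikSolution (D : HOData V) (G : V → ℝ) : Prop where
  continuous : Continuous G
  pos_zero : 0 < G 0
  hasLineDerivAt : ∀ x, HORegular D x → ∀ ξ, HasLineDerivAt ℝ G
    ((∑ α ∈ D.Rpos, D.k α * ⟪α, ξ⟫ / (1 - Real.exp (-⟪α, x⟫)) * (G (rRefl α x) - G x))
      + ⟪rhoHO D, ξ⟫ * G x) x ξ

/-- The coefficient with which the component at `w r_β` enters the derivative of the component
at `w`, up to the factor `k_β ⟪β, ξ⟫`. -/
def rate (D : HOData V) (w : weylGroup D) (β x : V) : ℝ :=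
  bose ⟪β, x⟫ + if w.1 β ∈ D.Rpos then 1 else 0

/-- The off-diagonal part, in the direction `ξ`, of the differential system satisfied by the
functions `y ↦ e^⟪ρ, y⟫ G (w y)` on the positive chamber. -/
def transfer (D : HOData V) (f : weylGroup D → ℝ) (x ξ : V) (w : weylGroup D) : ℝ :=
  ∑ β ∈ D.Rpos, D.k β * ⟪β, ξ⟫ * (rate D w β x * f (w * D.weylRefl β))

/-- The pulled back solution `e^⟪ρ, x⟫ G (w x)`, normalized by the expected exponential decay. -/
def tilted (D : HOData V) (G : V → ℝ) (w : weylGroup D) (x : V) : ℝ :=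
  Real.exp ⟪rhoHO D, x⟫ * G (w.1 x)

lemma k_mul_inner_nonneg {ξ : V} (hξ : ξ ∈ posChamber D) {β : V} (hβ : β ∈ D.Rpos) :
    0 ≤ D.k β * ⟪β, ξ⟫ :=
  mul_nonneg (D.k_pos β (D.pos_subset hβ)).le (hξ β hβ).le

lemma rate_nonneg {x : V} (hx : x ∈ posChamber D) (w : weylGroup D) {β : V} (hβ : β ∈ D.Rpos) :
    0 ≤ rate D w β x := by
  unfold rate
  have := bose_pos (hx β hβ)
  split_ifs <;> linarith

lemma transfer_nonneg {f : weylGroup D → ℝ} (hf : ∀ w, 0 ≤ f w) {x ξ : V}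
    (hx : x ∈ posChamber D) (hξ : ξ ∈ posChamber D) (w : weylGroup D) :
    0 ≤ transfer D f x ξ w :=
  Finset.sum_nonneg fun _ hβ => mul_nonneg (k_mul_inner_nonneg hξ hβ)
    (mul_nonneg (rate_nonneg hx w hβ) (hf _))

lemma inner_rhoHO (x : V) : ⟪rhoHO D, x⟫ = 2⁻¹ * ∑ β ∈ D.Rpos, D.k β * ⟪β, x⟫ := by
  simp only [rhoHO, real_inner_smul_left, sum_inner]

lemma k_posRep_weyl (w : weylGroup D) {β : V} (hβ : β ∈ D.R) :
    D.k (D.posRep (w.1 β)) = D.k β := by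
  unfold posRep
  split_ifs
  · exact D.k_weyl w hβ
  · rw [D.k_neg ((D.weyl_mem_iff w).2 hβ), D.k_weyl w hβ]

lemma rRefl_posRep (α x : V) : rRefl (D.posRep α) x = rRefl α x := by
  unfold posRep
  split_ifs
  exacts [rfl, rRefl_neg_left α x]

lemma inner_posRep_weyl (w : weylGroup D) (β x : V) :
    ⟪D.posRep (w.1 β), w.1 x⟫ = if w.1 β ∈ D.Rpos then ⟪β, x⟫ else -⟪β, x⟫ := by
  unfold posRep
  split_ifs
  · exact w.1.inner_map_map β x
  · rw [inner_neg_left, w.1.inner_map_map]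

lemma inner_rhoHO_add_inner_rhoHO_weyl (w : weylGroup D) (ξ : V) :
    ⟪rhoHO D, ξ⟫ + ⟪rhoHO D, w.1 ξ⟫ =
      ∑ β ∈ D.Rpos, D.k β * ⟪β, ξ⟫ * if w.1 β ∈ D.Rpos then 1 else 0 := by
  rw [inner_rhoHO, inner_rhoHO, ← sum_Rpos_posRep_weyl w (fun α => D.k α * ⟪α, w.1 ξ⟫), ← mul_add,
    ← Finset.sum_add_distrib, Finset.mul_sum]
  refine Finset.sum_congr rfl fun β hβ => ?_
  rw [k_posRep_weyl w (D.pos_subset hβ), inner_posRep_weyl]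
  split_ifs <;> ring

lemma cherednik_coeff_posRep_weyl (w : weylGroup D) {β x : V} (hβ : β ∈ D.R)
    (hx : ⟪β, x⟫ ≠ 0) (ξ : V) :
    D.k (D.posRep (w.1 β)) * ⟪D.posRep (w.1 β), w.1 ξ⟫ /
      (1 - Real.exp (-⟪D.posRep (w.1 β), w.1 x⟫)) = D.k β * ⟪β, ξ⟫ * rate D w β x := by
  rw [k_posRep_weyl w hβ, inner_posRep_weyl, inner_posRep_weyl, rate, div_eq_mul_inv]
  split_ifs
  · rw [inv_one_sub_exp_neg hx]
  · rw [neg_neg, inv_one_sub_exp]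
    ring

lemma sum_cherednik_weyl (G : V → ℝ) (w : weylGroup D) {x : V} (hx : x ∈ posChamber D) (ξ : V) :
    ∑ α ∈ D.Rpos, D.k α * ⟪α, w.1 ξ⟫ / (1 - Real.exp (-⟪α, w.1 x⟫)) *
        (G (rRefl α (w.1 x)) - G (w.1 x)) =
      ∑ β ∈ D.Rpos, D.k β * ⟪β, ξ⟫ * rate D w β x *
        (G ((w * D.weylRefl β).1 x) - G (w.1 x)) := by
  rw [← sum_Rpos_posRep_weyl w]
  refine Finset.sum_congr rfl fun β hβ => ?_
  rw [cherednik_coeff_posRep_weyl w (D.pos_subset hβ) (hx β hβ).ne', rRefl_posRep, ← map_rRefl,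
    mul_weylRefl_apply (D.pos_subset hβ)]

lemma IsCherednikSolution.hasDerivAt_weyl {G : V → ℝ} (hG : IsCherednikSolution D G)
    (w : weylGroup D) {x ξ : V} {t : ℝ} (hx : x + t • ξ ∈ posChamber D) :
    HasDerivAt (fun s => G (w.1 (x + s • ξ)))
      ((∑ β ∈ D.Rpos, D.k β * ⟪β, ξ⟫ * rate D w β (x + t • ξ) *
        (G ((w * D.weylRefl β).1 (x + t • ξ)) - G (w.1 (x + t • ξ))))
        + ⟪rhoHO D, w.1 ξ⟫ * G (w.1 (x + t • ξ))) t := by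
  rw [← sum_cherednik_weyl G w hx]
  have h := hG.hasLineDerivAt _ (regular_weyl hx w) (w.1 ξ)
  simp only [map_add, map_smul] at h ⊢
  exact hasDerivAt_add_smul_of_hasLineDerivAt h

lemma IsCherednikSolution.hasDerivAt_tilted {G : V → ℝ} (hG : IsCherednikSolution D G)
    (w : weylGroup D) {x ξ : V} {t : ℝ} (hx : x + t • ξ ∈ posChamber D) :
    HasDerivAt (fun s => tilted D G w (x + s • ξ))
      (transfer D (fun v => tilted D G v (x + t • ξ)) (x + t • ξ) ξ w
        - (∑ β ∈ D.Rpos, D.k β * ⟪β, ξ⟫ * bose ⟪β, x + t • ξ⟫)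
          * tilted D G w (x + t • ξ)) t := by
  refine ((hasDerivAt_inner_add_smul (rhoHO D) x ξ t).exp.mul
    (hG.hasDerivAt_weyl w hx)).congr_deriv ?_
  have hdiag := inner_rhoHO_add_inner_rhoHO_weyl w ξ
  have hrate : (∑ β ∈ D.Rpos, D.k β * ⟪β, ξ⟫ * bose ⟪β, x + t • ξ⟫) +
      (⟪rhoHO D, ξ⟫ + ⟪rhoHO D, w.1 ξ⟫) =
        ∑ β ∈ D.Rpos, D.k β * ⟪β, ξ⟫ * rate D w β (x + t • ξ) := by
    simp only [hdiag, rate, mul_add, Finset.sum_add_distrib]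
  have htransfer : transfer D (fun v => tilted D G v (x + t • ξ)) (x + t • ξ) ξ w =
      Real.exp ⟪rhoHO D, x + t • ξ⟫ * ∑ β ∈ D.Rpos, D.k β * ⟪β, ξ⟫ *
        rate D w β (x + t • ξ) * G ((w * D.weylRefl β).1 (x + t • ξ)) := by
    rw [transfer, Finset.mul_sum]
    exact Finset.sum_congr rfl fun β _ => by unfold tilted; ring
  rw [htransfer]
  simp only [mul_sub, Finset.sum_sub_distrib, ← Finset.sum_mul, ← hrate, tilted]
  ring

end System

section Gauge

variable {D : HOData V} {G : V → ℝ}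

/-- The Weyl denominator `∏ (1 - e^{-⟪β, x⟫})^{k_β}` over the positive roots. Multiplying by it
removes the diagonal terms from the differential system of the functions `tilted D G w`. -/
def weylDenom (D : HOData V) (x : V) : ℝ :=
  Real.exp (∑ β ∈ D.Rpos, D.k β * Real.log (1 - Real.exp (-⟪β, x⟫)))

/-- The pulled back solution `tilted D G w` multiplied by the Weyl denominator. -/
def gauged (D : HOData V) (G : V → ℝ) (w : weylGroup D) (x : V) : ℝ :=
  weylDenom D x * tilted D G w x

lemma weylDenom_pos (x : V) : 0 < weylDenom D x := Real.exp_pos _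

lemma weylDenom_le_one {x : V} (hx : x ∈ posChamber D) : weylDenom D x ≤ 1 := by
  refine Real.exp_le_one_iff.2 (Finset.sum_nonpos fun β hβ => ?_)
  have h : Real.exp (-⟪β, x⟫) < 1 := Real.exp_lt_one_iff.2 (neg_lt_zero.2 (hx β hβ))
  exact mul_nonpos_of_nonneg_of_nonpos (D.k_pos β (D.pos_subset hβ)).le
    (Real.log_nonpos (sub_nonneg.2 h.le) (sub_le_self _ (Real.exp_pos _).le))

lemma weylDenom_le_add {x y : V} (hx : x ∈ posChamber D) (hy : y ∈ posChamber D) :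
    weylDenom D x ≤ weylDenom D (x + y) := by
  refine Real.exp_le_exp.2 (Finset.sum_le_sum fun β hβ => ?_)
  refine mul_le_mul_of_nonneg_left (Real.log_le_log ?_ ?_) (D.k_pos β (D.pos_subset hβ)).le
  · exact sub_pos.2 (Real.exp_lt_one_iff.2 (neg_lt_zero.2 (hx β hβ)))
  · rw [inner_add_right]
    gcongr
    linarith [hy β hβ]

lemma hasDerivAt_weylDenom {x ξ : V} {t : ℝ} (hx : x + t • ξ ∈ posChamber D) :
    HasDerivAt (fun s => weylDenom D (x + s • ξ)) (weylDenom D (x + t • ξ) *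
      ∑ β ∈ D.Rpos, D.k β * ⟪β, ξ⟫ * bose ⟪β, x + t • ξ⟫) t := by
  refine (HasDerivAt.fun_sum fun β hβ => ?_).exp
  have hpos : 0 < ⟪β, x + t • ξ⟫ := hx β hβ
  have hne : 1 - Real.exp (-⟪β, x + t • ξ⟫) ≠ 0 :=
    (sub_pos.2 (Real.exp_lt_one_iff.2 (neg_lt_zero.2 hpos))).ne'
  refine ((((hasDerivAt_inner_add_smul β x ξ t).fun_neg.exp.const_sub 1).log hne).const_mul
    (D.k β)).congr_deriv ?_
  rw [div_eq_mul_inv, inv_one_sub_exp_neg hpos.ne', bose]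
  have hne' : Real.exp ⟪β, x + t • ξ⟫ - 1 ≠ 0 := (sub_pos.2 (Real.one_lt_exp_iff.2 hpos)).ne'
  rw [Real.exp_neg]
  field_simp
  ring

lemma transfer_const_mul (c : ℝ) (f : weylGroup D → ℝ) (x ξ : V) (w : weylGroup D) :
    transfer D (fun v => c * f v) x ξ w = c * transfer D f x ξ w := by
  simp only [transfer, Finset.mul_sum]
  exact Finset.sum_congr rfl fun β _ => by ring

lemma IsCherednikSolution.hasDerivAt_gauged (hG : IsCherednikSolution D G)
    (w : weylGroup D) {x ξ : V} {t : ℝ} (hx : x + t • ξ ∈ posChamber D) :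
    HasDerivAt (fun s => gauged D G w (x + s • ξ))
      (transfer D (fun v => gauged D G v (x + t • ξ)) (x + t • ξ) ξ w) t := by
  refine ((hasDerivAt_weylDenom hx).mul (hG.hasDerivAt_tilted w hx)).congr_deriv ?_
  simp only [gauged, transfer_const_mul]
  ring

lemma gauged_pos_iff {w : weylGroup D} {x : V} : 0 < gauged D G w x ↔ 0 < G (w.1 x) := by
  rw [gauged, tilted, mul_pos_iff_of_pos_left (weylDenom_pos x),
    mul_pos_iff_of_pos_left (Real.exp_pos _)]

/- All coefficients of the system for `gauged D G` are nonnegative on the chamber, and all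
components are positive near the origin. -/
theorem IsCherednikSolution.gauged_pos [Finite (weylGroup D)] (hG : IsCherednikSolution D G)
    {x : V} (hx : x ∈ posChamber D) (w : weylGroup D) : 0 < gauged D G w x := by
  have hnear : ∀ᶠ ε : ℝ in nhdsWithin 0 (Set.Ioi 0), ∀ v : weylGroup D, 0 < G (v.1 (ε • x)) := by
    refine Filter.eventually_all.2 fun v => nhdsWithin_le_nhds ?_
    have hcont : Continuous fun ε : ℝ => G (v.1 (ε • x)) :=
      hG.continuous.comp (v.1.continuous.comp (continuous_id.smul continuous_const))
    exact hcont.continuousAt.eventually_const_lt (by simpa using hG.pos_zero)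
  obtain ⟨ε, hεG, hε, hε₁⟩ := (hnear.and (Ioc_mem_nhdsGT one_pos)).exists
  have hmem : ∀ t ∈ Set.Icc ε 1, 0 + t • x ∈ posChamber D := fun t ht => by
    rw [zero_add]
    exact smul_mem_posChamber hx (hε.trans_le ht.1)
  have hpos := forall_pos_of_hasDerivAt_nonneg (a := ε) (b := 1)
    (d := fun v t => gauged D G v (0 + t • x))
    (fun v t ht => hG.hasDerivAt_gauged v (hmem t ht))
    (fun t ht hnonneg v => transfer_nonneg hnonneg (hmem t ht) hx v)
    (fun v => gauged_pos_iff.2 (by simpa only [zero_add] using hεG v)) 1 ⟨hε₁, le_rfl⟩ w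
  simpa only [zero_add, one_smul] using hpos

lemma IsCherednikSolution.tilted_pos [Finite (weylGroup D)] (hG : IsCherednikSolution D G)
    {x : V} (hx : x ∈ posChamber D) (w : weylGroup D) : 0 < tilted D G w x :=
  (mul_pos_iff_of_pos_left (weylDenom_pos x)).1 (hG.gauged_pos hx w)

end Gauge

section Harnack

variable {D : HOData V} {G : V → ℝ}

lemma neg_inner_rhoHO_le_inner_rhoHO_weyl (w : weylGroup D) {ξ : V} (hξ : ξ ∈ posChamber D) :
    -⟪rhoHO D, ξ⟫ ≤ ⟪rhoHO D, w.1 ξ⟫ := by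
  rw [neg_le_iff_add_nonneg', inner_rhoHO_add_inner_rhoHO_weyl]
  exact Finset.sum_nonneg fun β hβ => mul_nonneg (k_mul_inner_nonneg hξ hβ) (by positivity)

lemma inner_rhoHO_weyl_le (w : weylGroup D) {ξ : V} (hξ : ξ ∈ posChamber D) :
    ⟪rhoHO D, w.1 ξ⟫ ≤ ⟪rhoHO D, ξ⟫ := by
  have h : ⟪rhoHO D, ξ⟫ + ⟪rhoHO D, w.1 ξ⟫ ≤ 2 * ⟪rhoHO D, ξ⟫ := by
    rw [inner_rhoHO_add_inner_rhoHO_weyl, inner_rhoHO, mul_inv_cancel_left₀ two_ne_zero]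
    refine Finset.sum_le_sum fun β hβ => mul_le_of_le_one_right (k_mul_inner_nonneg hξ hβ) ?_
    split_ifs <;> norm_num
  linarith

lemma rate_mul_weylRefl (w : weylGroup D) {β : V} (hβ : β ∈ D.R) (x : V) :
    rate D (w * D.weylRefl β) β x = bose ⟪β, x⟫ + (1 - if w.1 β ∈ D.Rpos then 1 else 0) := by
  simp only [rate, mul_weylRefl_apply_self_mem_Rpos hβ]
  split_ifs <;> norm_num

lemma sum_rate_mul_weylRefl (w : weylGroup D) (x ξ : V) :
    ∑ β ∈ D.Rpos, D.k β * ⟪β, ξ⟫ * rate D (w * D.weylRefl β) β x =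
      (∑ β ∈ D.Rpos, D.k β * ⟪β, ξ⟫ * bose ⟪β, x⟫) + (⟪rhoHO D, ξ⟫ - ⟪rhoHO D, w.1 ξ⟫) := by
  have hsum := inner_rhoHO_add_inner_rhoHO_weyl w ξ
  have hrho : 2 * ⟪rhoHO D, ξ⟫ = ∑ β ∈ D.Rpos, D.k β * ⟪β, ξ⟫ := by
    rw [inner_rhoHO, mul_inv_cancel_left₀ two_ne_zero]
  calc ∑ β ∈ D.Rpos, D.k β * ⟪β, ξ⟫ * rate D (w * D.weylRefl β) β x
      = ∑ β ∈ D.Rpos, (D.k β * ⟪β, ξ⟫ * bose ⟪β, x⟫ + (D.k β * ⟪β, ξ⟫ -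
          D.k β * ⟪β, ξ⟫ * if w.1 β ∈ D.Rpos then 1 else 0)) :=
        Finset.sum_congr rfl fun β hβ => by rw [rate_mul_weylRefl w (D.pos_subset hβ)]; ring
    _ = _ := by
        rw [Finset.sum_add_distrib, Finset.sum_sub_distrib, ← hrho, ← hsum]
        ring

variable [Fintype (weylGroup D)]

lemma sum_transfer (f : weylGroup D → ℝ) (x ξ : V) :
    ∑ w, transfer D f x ξ w = ∑ w, ((∑ β ∈ D.Rpos, D.k β * ⟪β, ξ⟫ * bose ⟪β, x⟫) +
      (⟪rhoHO D, ξ⟫ - ⟪rhoHO D, w.1 ξ⟫)) * f w := by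
  simp only [transfer, ← sum_rate_mul_weylRefl, Finset.sum_mul]
  rw [Finset.sum_comm, Finset.sum_comm (s := Finset.univ)]
  refine Finset.sum_congr rfl fun β hβ => ?_
  have hinv : Function.Involutive fun w => w * D.weylRefl β :=
    mul_weylRefl_mul_weylRefl (D.pos_subset hβ)
  rw [← Equiv.sum_comp hinv.toPerm]
  exact Finset.sum_congr rfl fun w _ => by
    rw [Function.Involutive.coe_toPerm, mul_weylRefl_mul_weylRefl (D.pos_subset hβ), ← mul_assoc]

lemma IsCherednikSolution.hasDerivAt_sum_tilted (hG : IsCherednikSolution D G)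
    {x ξ : V} {t : ℝ} (hx : x + t • ξ ∈ posChamber D) :
    HasDerivAt (fun s => ∑ w, tilted D G w (x + s • ξ))
      (∑ w : weylGroup D, (⟪rhoHO D, ξ⟫ - ⟪rhoHO D, w.1 ξ⟫) * tilted D G w (x + t • ξ)) t := by
  refine (HasDerivAt.fun_sum fun w _ => hG.hasDerivAt_tilted w hx).congr_deriv ?_
  rw [Finset.sum_sub_distrib, sum_transfer, ← Finset.sum_sub_distrib]
  exact Finset.sum_congr rfl fun w _ => by ring

theorem IsCherednikSolution.sum_tilted_le_add (hG : IsCherednikSolution D G) {x ξ : V}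
    (hx : x ∈ posChamber D) (hξ : ξ ∈ posChamber D) :
    ∑ w, tilted D G w x ≤ ∑ w, tilted D G w (x + ξ) := by
  have hmem : ∀ t ∈ Set.Icc (0 : ℝ) 1, x + t • ξ ∈ posChamber D := fun t ht =>
    add_smul_mem_posChamber hx hξ ht.1
  simpa using le_of_hasDerivAt_nonneg zero_le_one
    (fun t ht => hG.hasDerivAt_sum_tilted (hmem t ht)) fun t ht => Finset.sum_nonneg fun w _ =>
      mul_nonneg (sub_nonneg.2 (inner_rhoHO_weyl_le w hξ))
        (hG.tilted_pos (hmem t (Set.Ioo_subset_Icc_self ht)) w).le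

theorem IsCherednikSolution.sum_tilted_add_le (hG : IsCherednikSolution D G) {x ξ : V}
    (hx : x ∈ posChamber D) (hξ : ξ ∈ posChamber D) :
    ∑ w, tilted D G w (x + ξ) ≤ Real.exp (2 * ⟪rhoHO D, ξ⟫) * ∑ w, tilted D G w x := by
  have hmem : ∀ t ∈ Set.Icc (0 : ℝ) 1, x + t • ξ ∈ posChamber D := fun t ht =>
    add_smul_mem_posChamber hx hξ ht.1
  have hnonneg : ∀ t ∈ Set.Icc (0 : ℝ) 1, ∀ w, 0 ≤ tilted D G w (x + t • ξ) := fun t ht w =>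
    (hG.tilted_pos (hmem t ht) w).le
  have hbound : ∀ t ∈ Set.Ico (0 : ℝ) 1,
      ‖∑ w : weylGroup D, (⟪rhoHO D, ξ⟫ - ⟪rhoHO D, w.1 ξ⟫) * tilted D G w (x + t • ξ)‖ ≤
        2 * ⟪rhoHO D, ξ⟫ * ‖∑ w, tilted D G w (x + t • ξ)‖ + 0 := fun t ht => by
    have hnonneg' := hnonneg t (Set.Ico_subset_Icc_self ht)
    rw [Real.norm_of_nonneg (Finset.sum_nonneg fun w _ => hnonneg' w), Real.norm_of_nonneg
      (Finset.sum_nonneg fun w _ => mul_nonneg (sub_nonneg.2 (inner_rhoHO_weyl_le w hξ))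
        (hnonneg' w)), add_zero, Finset.mul_sum]
    refine Finset.sum_le_sum fun w _ => mul_le_mul_of_nonneg_right ?_ (hnonneg' w)
    linarith [neg_inner_rhoHO_le_inner_rhoHO_weyl w hξ]
  have h := norm_le_gronwallBound_of_norm_deriv_right_le (fun t ht =>
    (hG.hasDerivAt_sum_tilted (hmem t ht)).continuousAt.continuousWithinAt) (fun t ht =>
    (hG.hasDerivAt_sum_tilted (hmem t (Set.Ico_subset_Icc_self ht))).hasDerivWithinAt) le_rfl
    hbound 1 ⟨zero_le_one, le_rfl⟩
  rw [gronwallBound_ε0, Real.norm_of_nonneg (Finset.sum_nonneg fun w _ =>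
    hnonneg 1 ⟨zero_le_one, le_rfl⟩ w), Real.norm_of_nonneg (Finset.sum_nonneg fun w _ =>
    hnonneg 0 ⟨le_rfl, zero_le_one⟩ w)] at h
  simpa [mul_comm] using h

end Harnack

section LowerBound

variable {D : HOData V} {G : V → ℝ}

lemma exists_injOn_slope {u : V} (hu : u ∈ posChamber D) :
    ∃ v : V, Set.InjOn (fun γ => ⟪γ, v⟫ / ⟪γ, u⟫) (Rpos0 D) := by
  let normalDiff (p : Rpos0 D × Rpos0 D) : V := ⟪p.2.1, u⟫ • p.1.1 - ⟪p.1.1, u⟫ • p.2.1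
  have hne (p : {p : Rpos0 D × Rpos0 D // p.1 ≠ p.2}) : normalDiff p.1 ≠ 0 := by
    obtain ⟨⟨⟨γ, hγ⟩, ⟨δ, hδ⟩⟩, hne⟩ := p
    intro h0
    have hγu := hu γ (Rpos0_subset_Rpos hγ)
    have hδu := hu δ (Rpos0_subset_Rpos hδ)
    have hδγ : (⟪δ, u⟫ / ⟪γ, u⟫) • γ = δ := by
      rw [div_eq_inv_mul, mul_smul, sub_eq_zero.1 h0, inv_smul_smul₀ hγu.ne']
    refine hne (Subtype.ext ?_)
    exact (eq_of_smul_mem_Rpos0 hγ (div_pos hδu hγu) (hδγ.symm ▸ hδ)).symm.trans hδγ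
  obtain ⟨v, -, hv⟩ := Module.Dual.exists_forall_mem_ne_zero_of_forall_exists
    (⊤ : Submodule ℝ V) (fun p : {p : Rpos0 D × Rpos0 D // p.1 ≠ p.2} =>
      (innerSL ℝ (normalDiff p.1)).toLinearMap)
    (fun p => ⟨normalDiff p.1, trivial, inner_self_ne_zero.2 (hne p)⟩)
  refine ⟨v, fun γ hγ δ hδ h => by_contra fun hγδ =>
    hv ⟨(⟨γ, hγ⟩, ⟨δ, hδ⟩), fun h => hγδ (congrArg Subtype.val h)⟩ ?_⟩
  rw [div_eq_div_iff (hu γ (Rpos0_subset_Rpos hγ)).ne' (hu δ (Rpos0_subset_Rpos hδ)).ne'] at h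
  simp only [normalDiff, ContinuousLinearMap.coe_coe, innerSL_apply_apply, inner_sub_left,
    real_inner_smul_left]
  linarith

lemma weyl_mem_Rpos_iff_of_posRep {w : weylGroup D} {ε q : V} (hε : ε ∈ D.R)
    (hq : ⟪ε, q⟫ ≠ 0) (h : w.1 (D.posRep ε) ∈ D.Rpos ↔ 0 < ⟪D.posRep ε, q⟫) :
    w.1 ε ∈ D.Rpos ↔ 0 < ⟪ε, q⟫ := by
  unfold posRep at h
  split_ifs at h
  · exact h
  · rw [map_neg, neg_mem_Rpos_iff ((D.weyl_mem_iff w).2 hε), inner_neg_left, neg_pos] at h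
    rw [← not_iff_not, h, not_lt, le_iff_lt_or_eq, or_iff_left hq]

lemma posSet_mul_weylRefl {w : weylGroup D} {γ q : V} (hγ : γ ∈ posSet D w) (hγq : ⟪γ, q⟫ = 0)
    (hq : ∀ δ ∈ Rpos0 D, δ ≠ γ → ⟪δ, q⟫ ≠ 0)
    (hw : ∀ δ ∈ Rpos0 D, δ ≠ γ → (w.1 δ ∈ D.Rpos ↔ 0 < ⟪δ, q⟫)) :
    posSet D (w * D.weylRefl γ) = (posSet D w).erase γ := by
  obtain ⟨hγ₀, hwγ⟩ := mem_posSet.1 hγ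
  have hγR := Rpos0_subset hγ₀
  ext δ
  simp only [mem_posSet, Finset.mem_erase]
  rcases eq_or_ne δ γ with rfl | hδγ
  · simp only [mul_weylRefl_apply_self_mem_Rpos hγR, hwγ, not_true_eq_false, and_false, ne_eq,
      false_and]
  rw [and_iff_right hδγ, and_congr_right_iff]
  intro hδ
  have hinner : ⟪rRefl γ δ, q⟫ = ⟪δ, q⟫ := by
    rw [inner_rRefl_left, inner_rRefl_right, hγq]
    ring
  have hne : ⟪rRefl γ δ, q⟫ ≠ 0 := hinner ▸ hq δ hδ hδγ
  have hmem : D.posRep (rRefl γ δ) ∈ Rpos0 D := by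
    simpa only [weylRefl_apply hγR] using posRep_weyl_mem_Rpos0 (D.weylRefl γ) hδ
  have hne' : D.posRep (rRefl γ δ) ≠ γ := by
    intro h
    rw [← h] at hγq
    unfold posRep at hγq
    split_ifs at hγq
    · exact hne hγq
    · exact hne (neg_eq_zero.1 (inner_neg_left (𝕜 := ℝ) _ q ▸ hγq))
  rw [mul_weylRefl_apply hγR, weyl_mem_Rpos_iff_of_posRep
    ((D.rRefl_mem_iff hγR).2 (Rpos0_subset hδ)) hne (hw _ hmem hne'), hinner, hw δ hδ hδγ]

lemma posSet_mul_weylRefl_of_slope {u v : V} (hu : u ∈ posChamber D)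
    (hv : Set.InjOn (fun γ => ⟪γ, v⟫ / ⟪γ, u⟫) (Rpos0 D)) {w : weylGroup D} {γ : V}
    (hγ : γ ∈ posSet D w)
    (hupper : ∀ δ ∈ Rpos0 D, δ ∉ posSet D w → ⟪δ, v⟫ / ⟪δ, u⟫ < ⟪γ, v⟫ / ⟪γ, u⟫)
    (hmin : ∀ δ ∈ posSet D w, ⟪γ, v⟫ / ⟪γ, u⟫ ≤ ⟪δ, v⟫ / ⟪δ, u⟫) :
    posSet D (w * D.weylRefl γ) = (posSet D w).erase γ := by
  have hγ₀ := (mem_posSet.1 hγ).1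
  have hinner : ∀ δ ∈ Rpos0 D, ⟪δ, v - (⟪γ, v⟫ / ⟪γ, u⟫) • u⟫ =
      (⟪δ, v⟫ / ⟪δ, u⟫ - ⟪γ, v⟫ / ⟪γ, u⟫) * ⟪δ, u⟫ := fun δ hδ => by
    rw [inner_sub_right, real_inner_smul_right, sub_mul,
      div_mul_cancel₀ _ (hu δ (Rpos0_subset_Rpos hδ)).ne']
  refine posSet_mul_weylRefl hγ (q := v - (⟪γ, v⟫ / ⟪γ, u⟫) • u) ?_ (fun δ hδ hδγ => ?_)
    fun δ hδ hδγ => ?_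
  · rw [hinner γ hγ₀, sub_self, zero_mul]
  · rw [hinner δ hδ]
    exact mul_ne_zero (sub_ne_zero.2 fun h => hδγ (hv hδ hγ₀ h))
      (hu δ (Rpos0_subset_Rpos hδ)).ne'
  · rw [hinner δ hδ, mul_pos_iff_of_pos_right (hu δ (Rpos0_subset_Rpos hδ)), sub_pos]
    refine ⟨fun h => (hmin δ (mem_posSet.2 ⟨hδ, h⟩)).lt_of_ne fun h => hδγ (hv hδ hγ₀ h.symm),
      fun h => by_contra fun h' => ?_⟩
    exact h.not_gt (hupper δ hδ fun h => h' (mem_posSet.1 h).2)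

lemma le_transfer {f : weylGroup D → ℝ} (hf : ∀ w, 0 ≤ f w) {x ξ : V} (hx : x ∈ posChamber D)
    (hξ : ξ ∈ posChamber D) {w : weylGroup D} {γ : V} (hγ : γ ∈ D.Rpos) (hw : w.1 γ ∈ D.Rpos) :
    D.k γ * ⟪γ, ξ⟫ * f (w * D.weylRefl γ) ≤ transfer D f x ξ w := by
  refine le_trans ?_ (Finset.single_le_sum (fun β hβ => mul_nonneg (k_mul_inner_nonneg hξ hβ)
    (mul_nonneg (rate_nonneg hx w hβ) (hf _))) hγ)
  refine mul_le_mul_of_nonneg_left (le_mul_of_one_le_left (hf _) ?_) (k_mul_inner_nonneg hξ hγ)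
  rw [rate, if_pos hw]
  linarith [bose_pos (hx γ hγ)]

lemma mul_pow_div_factorial_le {f f' : ℝ → ℝ} {c : ℝ} {n : ℕ}
    (hf : ∀ t, 0 ≤ t → HasDerivAt f (f' t) t)
    (hf' : ∀ t, 0 ≤ t → c * (t ^ n / n.factorial) ≤ f' t) (hf₀ : 0 ≤ f 0) {t : ℝ} (ht : 0 ≤ t) :
    c * (t ^ (n + 1) / (n + 1).factorial) ≤ f t := by
  have hpow (s : ℝ) : HasDerivAt (fun s => c * (s ^ (n + 1) / (n + 1).factorial))
      (c * (s ^ n / n.factorial)) s := by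
    refine (((hasDerivAt_pow (n + 1) s).div_const _).const_mul c).congr_deriv ?_
    rw [Nat.factorial_succ, Nat.cast_mul, add_tsub_cancel_right, mul_div_mul_left]
    exact Nat.cast_ne_zero.2 n.succ_ne_zero
  have h := le_of_hasDerivAt_nonneg ht (fun s hs => (hf s hs.1).sub (hpow s))
    fun s hs => sub_nonneg.2 (hf' s hs.1.le)
  simp only [Pi.sub_apply, ne_eq, n.succ_ne_zero, not_false_eq_true, zero_pow, zero_div, mul_zero,
    sub_zero] at h
  linarith

/- Removing the element of smallest slope from `posSet D w` is a reflection, and the component at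
the reflected Weyl group element drives the component at `w`: each of the `#(posSet D w)` steps
contributes one integration in `t`. -/
theorem IsCherednikSolution.prod_posSet_le_gauged [Finite (weylGroup D)]
    (hG : IsCherednikSolution D G) {u v ξ : V} {c : ℝ} (hu : u ∈ posChamber D)
    (hξ : ξ ∈ posChamber D) (hv : Set.InjOn (fun γ => ⟪γ, v⟫ / ⟪γ, u⟫) (Rpos0 D))
    (hc : ∀ w, c ≤ gauged D G w u) (w : weylGroup D)
    (hw : ∀ γ ∈ posSet D w, ∀ δ ∈ Rpos0 D, δ ∉ posSet D w → ⟪δ, v⟫ / ⟪δ, u⟫ < ⟪γ, v⟫ / ⟪γ, u⟫)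
    {t : ℝ} (ht : 0 ≤ t) :
    c * (∏ γ ∈ posSet D w, D.k γ * ⟪γ, ξ⟫) *
      (t ^ (posSet D w).card / (posSet D w).card.factorial) ≤ gauged D G w (u + t • ξ) := by
  have hmem : ∀ t : ℝ, 0 ≤ t → u + t • ξ ∈ posChamber D := fun t =>
    add_smul_mem_posChamber hu hξ
  have hpos : ∀ w, ∀ t : ℝ, 0 ≤ t → 0 ≤ gauged D G w (u + t • ξ) := fun w t ht =>
    (hG.gauged_pos (hmem t ht) w).le
  generalize hA : posSet D w = A at hw ⊢
  induction A using Finset.induction_on_min_value (fun γ => ⟪γ, v⟫ / ⟪γ, u⟫)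
    generalizing w t with
  | empty =>
    have h := le_of_hasDerivAt_nonneg ht
      (fun s hs => hG.hasDerivAt_gauged w (hmem s hs.1))
      (fun s hs => transfer_nonneg (hpos · s hs.1.le) (hmem s hs.1.le) hξ w)
    simpa using (hc w).trans (by simpa using h)
  | insert γ A hγA hmin ih =>
    have hγ : γ ∈ posSet D w := hA ▸ Finset.mem_insert_self γ A
    obtain ⟨hγ₀, hwγ⟩ := mem_posSet.1 hγ
    have hstep : posSet D (w * D.weylRefl γ) = A := by
      rw [posSet_mul_weylRefl_of_slope hu hv hγ (hA ▸ hw γ (Finset.mem_insert_self γ A))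
        (by simpa [hA] using hmin), hA, Finset.erase_insert hγA]
    have hupper : ∀ ε ∈ A, ∀ δ ∈ Rpos0 D, δ ∉ A → ⟪δ, v⟫ / ⟪δ, u⟫ < ⟪ε, v⟫ / ⟪ε, u⟫ := by
      intro ε hε δ hδ hδA
      have hε₀ : ε ∈ Rpos0 D := (mem_posSet.1 (hstep.symm ▸ hε)).1
      rcases eq_or_ne δ γ with rfl | hδγ
      · exact (hmin ε hε).lt_of_ne fun h => hγA (hv hγ₀ hε₀ h ▸ hε)
      · exact hw ε (Finset.mem_insert_of_mem hε) δ hδ (by simp [hδγ, hδA])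
    rw [Finset.card_insert_of_notMem hγA, Finset.prod_insert hγA]
    refine mul_pow_div_factorial_le (f := fun t => gauged D G w (u + t • ξ))
      (fun s hs => hG.hasDerivAt_gauged w (hmem s hs)) (fun s hs => ?_)
      (by simpa using hpos w 0 le_rfl) ht
    refine le_trans ?_ (le_transfer (hpos · s hs) (hmem s hs) hξ (Rpos0_subset_Rpos hγ₀) hwγ)
    calc c * (D.k γ * ⟪γ, ξ⟫ * ∏ δ ∈ A, D.k δ * ⟪δ, ξ⟫) * (s ^ A.card / A.card.factorial)
        = D.k γ * ⟪γ, ξ⟫ * (c * (∏ δ ∈ A, D.k δ * ⟪δ, ξ⟫) * (s ^ A.card / A.card.factorial)) := by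
          ring
      _ ≤ D.k γ * ⟪γ, ξ⟫ * gauged D G (w * D.weylRefl γ) (u + s • ξ) :=
          mul_le_mul_of_nonneg_left (ih _ hs hstep hupper)
            (k_mul_inner_nonneg hξ (Rpos0_subset_Rpos hγ₀))

theorem IsCherednikSolution.exists_lower_bound [Fintype (weylGroup D)]
    (hG : IsCherednikSolution D G) :
    ∃ c > 0, ∀ x ∈ posChamber D,
      c * ∏ α ∈ Rpos0 D, (1 + ⟪α, x⟫) ≤ ∑ w, tilted D G w x := by
  obtain ⟨u, hu₁⟩ := D.exists_one_le_inner
  have hu : u ∈ posChamber D := fun α hα => one_pos.trans_le (hu₁ α hα)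
  obtain ⟨v, hv⟩ := exists_injOn_slope hu
  obtain ⟨w₀, hw₀⟩ := Finite.exists_min fun w => gauged D G w u
  set N := (Rpos0 D).card
  set κ := ∏ γ ∈ Rpos0 D, D.k γ
  have hκ : 0 < κ := Finset.prod_pos fun γ hγ => D.k_pos γ (Rpos0_subset hγ)
  have hc := hG.gauged_pos hu w₀
  refine ⟨(Real.exp (2 * ⟪rhoHO D, u + u⟫))⁻¹ * (gauged D G w₀ u * κ * (N.factorial : ℝ)⁻¹),
    by positivity, fun x hx => ?_⟩
  have huu := add_mem_posChamber hu hu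
  have hprod : ∏ α ∈ Rpos0 D, (1 + ⟪α, x⟫) ≤ ∏ α ∈ Rpos0 D, ⟪α, x + u⟫ := by
    refine Finset.prod_le_prod (fun α hα => ?_) fun α hα => ?_
    · linarith [hx α (Rpos0_subset_Rpos hα)]
    · rw [inner_add_right]
      linarith [hu₁ α (Rpos0_subset_Rpos hα)]
  have hgauged := hG.prod_posSet_le_gauged hu (add_mem_posChamber hx hu) hv hw₀ 1
    (fun _ _ δ hδ hδ' => absurd (posSet_one (D := D) ▸ hδ) hδ') zero_le_one
  rw [posSet_one, Finset.prod_mul_distrib, one_pow, one_smul, one_div,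
    show u + (x + u) = x + (u + u) by abel] at hgauged
  rw [mul_assoc, inv_mul_le_iff₀ (Real.exp_pos _)]
  calc gauged D G w₀ u * κ * (N.factorial : ℝ)⁻¹ * ∏ α ∈ Rpos0 D, (1 + ⟪α, x⟫)
      ≤ gauged D G w₀ u * κ * (N.factorial : ℝ)⁻¹ * ∏ α ∈ Rpos0 D, ⟪α, x + u⟫ := by gcongr
    _ = gauged D G w₀ u * (κ * ∏ α ∈ Rpos0 D, ⟪α, x + u⟫) * (N.factorial : ℝ)⁻¹ := by ring
    _ ≤ gauged D G 1 (x + (u + u)) := hgauged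
    _ ≤ tilted D G 1 (x + (u + u)) :=
        mul_le_of_le_one_left (hG.tilted_pos (add_mem_posChamber hx huu) 1).le
          (weylDenom_le_one (add_mem_posChamber hx huu))
    _ ≤ ∑ w, tilted D G w (x + (u + u)) :=
        Finset.single_le_sum (fun w _ => (hG.tilted_pos (add_mem_posChamber hx huu) w).le)
          (Finset.mem_univ 1)
    _ ≤ _ := hG.sum_tilted_add_le hx huu

end LowerBound

section PosProd

variable {D : HOData V}

/-- The product of the factors `1 + max ⟪ε, y⟫ 0` over the positive indivisible roots `ε`: on the
chamber this is `∏ (1 + ⟪ε, y⟫)`, and on its image under `w` only the factors belonging to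
`posSet D w` survive. -/
def posProd (D : HOData V) (y : V) : ℝ := ∏ ε ∈ Rpos0 D, (1 + max ⟪ε, y⟫ 0)

lemma one_add_max_zero_pos (s : ℝ) : 0 < 1 + max s 0 :=
  add_pos_of_pos_of_nonneg one_pos (le_max_right _ _)

lemma posProd_pos (y : V) : 0 < posProd D y :=
  Finset.prod_pos fun _ _ => one_add_max_zero_pos _

lemma posProd_weyl (w : weylGroup D) {x : V} (hx : x ∈ posChamber D) :
    posProd D (w.1 x) = ∏ δ ∈ posSet D w, (1 + ⟪δ, x⟫) := by
  rw [posProd, ← prod_Rpos0_posRep_weyl w, posSet, Finset.prod_filter]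
  refine Finset.prod_congr rfl fun δ hδ => ?_
  have hδx := (hx δ (Rpos0_subset_Rpos hδ)).le
  rw [inner_posRep_weyl]
  split_ifs
  · rw [max_eq_left hδx]
  · rw [max_eq_right (neg_nonpos.2 hδx), add_zero]

lemma prod_posSet_le {x : V} (hx : x ∈ posChamber D) (w : weylGroup D) :
    ∏ δ ∈ posSet D w, (1 + ⟪δ, x⟫) ≤ ∏ δ ∈ Rpos0 D, (1 + ⟪δ, x⟫) :=
  Finset.prod_le_prod_of_subset_of_one_le (Finset.filter_subset _ _)
    (fun δ hδ => by linarith [hx δ (Rpos0_subset_Rpos (mem_posSet.1 hδ).1)])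
    (fun δ hδ _ => by linarith [hx δ (Rpos0_subset_Rpos hδ)])

lemma inner_rRefl_le_of_notMem_Rpos {β ε y : V} (hβ : β ∈ D.Rpos) (hε : ε ∈ D.Rpos)
    (h : rRefl β ε ∉ D.Rpos) (hy : 0 ≤ ⟪β, y⟫) : ⟪rRefl β ε, y⟫ ≤ ⟪ε, y⟫ := by
  obtain ⟨u, hu⟩ := D.posChamber_nonempty
  have hneg := inner_neg_of_notMem_Rpos hu
    (D.refl_mem β (D.pos_subset hβ) ε (D.pos_subset hε)) h
  have hcoeff : 0 < 2 / ⟪β, β⟫ :=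
    div_pos two_pos (real_inner_self_pos.2 (D.root_ne_zero β (D.pos_subset hβ)))
  rw [inner_rRefl_left, inner_rRefl_right] at hneg ⊢
  have hεβ : 0 < ⟪ε, β⟫ := by
    refine pos_of_mul_pos_right ?_ (mul_pos hcoeff (hu β hβ)).le
    linarith [hu ε hε]
  exact sub_le_self _ (by positivity)

lemma prod_Rpos0_rRefl (g : V → ℝ) {β : V} (hβ : β ∈ D.R) :
    ∏ ε ∈ Rpos0 D, g (rRefl β ε) =
      ∏ ε ∈ Rpos0 D, if rRefl β ε ∈ D.Rpos then g ε else g (rRefl β ε) := by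
  have hmem : ∀ ε ∈ Rpos0 D, rRefl β ε ∈ D.Rpos → rRefl β ε ∈ Rpos0 D := fun ε hε h => by
    simpa only [posRep, weylRefl_apply hβ, if_pos h] using
      posRep_weyl_mem_Rpos0 (D.weylRefl β) hε
  rw [Finset.prod_ite, ← Finset.prod_filter_mul_prod_filter_not _ (rRefl β · ∈ D.Rpos)]
  congr 1
  have hmaps : ∀ ε ∈ {ε ∈ Rpos0 D | rRefl β ε ∈ D.Rpos},
      rRefl β ε ∈ {ε ∈ Rpos0 D | rRefl β ε ∈ D.Rpos} := fun ε hε => by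
    rw [Finset.mem_filter] at hε ⊢
    rw [rRefl_rRefl]
    exact ⟨hmem ε hε.1 hε.2, Rpos0_subset_Rpos hε.1⟩
  exact Finset.prod_nbij' (rRefl β) (rRefl β) hmaps hmaps (fun ε _ => rRefl_rRefl β ε)
    (fun ε _ => rRefl_rRefl β ε) fun _ _ => rfl

lemma mul_posProd_rRefl_le {β y : V} (hβ : β ∈ Rpos0 D) (hy : 0 ≤ ⟪β, y⟫) :
    (1 + ⟪β, y⟫) * posProd D (rRefl β y) ≤ posProd D y := by
  have hβ' := Rpos0_subset_Rpos hβ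
  have hneg : rRefl β β ∉ D.Rpos := by
    rw [rRefl_self]
    exact (neg_mem_Rpos_iff (Rpos0_subset hβ)).not_left.2 hβ'
  simp only [posProd, ← inner_rRefl_left]
  rw [prod_Rpos0_rRefl (fun ε => 1 + max ⟪ε, y⟫ 0) (Rpos0_subset hβ),
    ← Finset.mul_prod_erase _ _ hβ, ← Finset.mul_prod_erase (Rpos0 D) _ hβ, if_neg hneg,
    rRefl_self, inner_neg_left, max_eq_right (neg_nonpos.2 hy), max_eq_left hy, add_zero, one_mul]
  refine mul_le_mul_of_nonneg_left (Finset.prod_le_prod (fun ε _ => ?_) fun ε hε => ?_)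
    (by linarith)
  · split_ifs <;> exact (one_add_max_zero_pos _).le
  · split_ifs with h
    · exact le_rfl
    · gcongr
      exact inner_rRefl_le_of_notMem_Rpos hβ' (Rpos0_subset_Rpos (Finset.mem_of_mem_erase hε)) h hy

lemma exists_one_add_mul_pow_le_exp {B : ℝ} (hB : 0 < B) (N : ℕ) :
    ∃ C > 0, ∀ s, 0 ≤ s → (1 + B * s) ^ N ≤ C * Real.exp (s / 2) := by
  refine ⟨(2 * B) ^ N * N.factorial * Real.exp (1 / (2 * B)), by positivity, fun s hs => ?_⟩
  have h := Real.pow_div_factorial_le_exp (x := 1 / (2 * B) + s / 2) (by positivity) N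
  rw [div_le_iff₀ (by positivity), Real.exp_add] at h
  calc (1 + B * s) ^ N = (2 * B) ^ N * (1 / (2 * B) + s / 2) ^ N := by
        rw [← mul_pow]
        congr 1
        field_simp
    _ ≤ (2 * B) ^ N * (Real.exp (1 / (2 * B)) * Real.exp (s / 2) * N.factorial) := by gcongr
    _ = _ := by ring

lemma one_add_max_inner_rRefl_le {α ε : V} {B : ℝ} (hB : |2 / ⟪α, α⟫ * ⟪ε, α⟫| ≤ B) (y : V) :
    1 + max ⟪ε, rRefl α y⟫ 0 ≤ (1 + B * |⟪α, y⟫|) * (1 + max ⟪ε, y⟫ 0) := by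
  have hshift : |2 / ⟪α, α⟫ * ⟪α, y⟫ * ⟪ε, α⟫| ≤ B * |⟪α, y⟫| := by
    rw [mul_right_comm, abs_mul]
    gcongr
  have hBy : 0 ≤ B * |⟪α, y⟫| := (abs_nonneg _).trans hshift
  have hmax := mul_nonneg hBy (le_max_right ⟪ε, y⟫ 0)
  have hle : max ⟪ε, rRefl α y⟫ 0 ≤ max ⟪ε, y⟫ 0 + B * |⟪α, y⟫| := by
    refine max_le ?_ (add_nonneg (le_max_right _ _) hBy)
    rw [inner_rRefl_right]
    linarith [le_max_left ⟪ε, y⟫ 0, (abs_le.1 hshift).1]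
  linarith

variable (D) in
lemma exists_posProd_rRefl_le : ∃ C > 0, ∀ α ∈ D.R, ∀ y,
    posProd D (rRefl α y) ≤ C * Real.exp (|⟪α, y⟫| / 2) * posProd D y := by
  obtain ⟨B, hB⟩ := ((D.R ×ˢ D.R).image fun p => |2 / ⟪p.1, p.1⟫ * ⟪p.2, p.1⟫|).bddAbove
  obtain ⟨C, hC, hexp⟩ := exists_one_add_mul_pow_le_exp (B := max B 1) (by positivity)
    (Rpos0 D).card
  refine ⟨C, hC, fun α hα y => ?_⟩
  calc posProd D (rRefl α y)
      ≤ ∏ ε ∈ Rpos0 D, (1 + max B 1 * |⟪α, y⟫|) * (1 + max ⟪ε, y⟫ 0) :=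
        Finset.prod_le_prod (fun _ _ => (one_add_max_zero_pos _).le) fun ε hε =>
          one_add_max_inner_rRefl_le ((hB (Finset.mem_coe.2 (Finset.mem_image_of_mem _
            (Finset.mk_mem_product hα (Rpos0_subset hε))))).trans (le_max_left _ _)) y
    _ = (1 + max B 1 * |⟪α, y⟫|) ^ (Rpos0 D).card * posProd D y := by
        rw [Finset.prod_mul_distrib, Finset.prod_const, posProd]
    _ ≤ C * Real.exp (|⟪α, y⟫| / 2) * posProd D y :=
        mul_le_mul_of_nonneg_right (hexp _ (abs_nonneg _)) (posProd_pos y).le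

end PosProd

section Supersolution

variable {D : HOData V}

lemma bose_le {s : ℝ} (hs : 1 ≤ s) : bose s ≤ 2 * Real.exp (-s) := by
  have hexp := Real.add_one_le_exp s
  rw [bose, Real.exp_neg, inv_le_iff_one_le_mul₀ (by linarith)]
  field_simp
  linarith

lemma inner_mul_weylRefl_apply_lt {u : V} (hu : u ∈ posChamber D) {w : weylGroup D} {β : V}
    (hβ : β ∈ D.Rpos) (hw : w.1 β ∈ D.Rpos) : ⟪u, (w * D.weylRefl β).1 u⟫ < ⟪u, w.1 u⟫ := by
  have hβ0 := D.root_ne_zero β (D.pos_subset hβ)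
  have huw : 0 < ⟪u, w.1 β⟫ := real_inner_comm u (w.1 β) ▸ hu _ hw
  rw [mul_weylRefl_apply (D.pos_subset hβ), rRefl, map_sub, map_smul, inner_sub_right,
    real_inner_smul_right, inner_coroot_left]
  exact sub_lt_self _ (mul_pos (mul_pos (div_pos two_pos (real_inner_self_pos.2 hβ0)) (hu β hβ))
    huw)

variable (D) in
/- The weight of `w` is a power of `η` whose exponent ranks `⟪u, w u⟫` among the values
`⟪u, v u⟫`, for a fixed `u` in the chamber. -/
lemma exists_weyl_weight [Finite (weylGroup D)] {η : ℝ} (hη : 0 < η) (hη₁ : η ≤ 1) :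
    ∃ c : weylGroup D → ℝ, (∀ w, 0 < c w) ∧
      ∀ w, ∀ β ∈ D.Rpos, w.1 β ∈ D.Rpos → c (w * D.weylRefl β) ≤ η * c w := by
  obtain ⟨u, hu⟩ := D.posChamber_nonempty
  let above (w : weylGroup D) : Set (weylGroup D) := {v | ⟪u, w.1 u⟫ < ⟪u, v.1 u⟫}
  refine ⟨fun w => η ^ (above w).ncard, fun w => pow_pos hη _, fun w β hβ hw => ?_⟩
  have hlt := inner_mul_weylRefl_apply_lt hu hβ hw
  have hssub : above w ⊂ above (w * D.weylRefl β) :=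
    ⟨fun v hv => hlt.trans hv, fun h => lt_irrefl ⟪u, w.1 u⟫ (h hlt)⟩
  rw [← pow_succ']
  exact pow_le_pow_of_le_one hη.le hη₁ (Set.ncard_lt_ncard hssub)

/-- A bounded potential whose gradient dominates the exponentially decaying part `bose` of the
coefficients of the differential system. -/
def potential (D : HOData V) (x : V) : ℝ :=
  ∑ β ∈ D.Rpos, D.k β * (2 * Real.exp (-⟪β, x⟫ / 2))

lemma potential_nonneg (x : V) : 0 ≤ potential D x :=
  Finset.sum_nonneg fun β hβ => mul_nonneg (D.k_pos β (D.pos_subset hβ)).le (by positivity)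

lemma hasDerivAt_potential (x ξ : V) (t : ℝ) :
    HasDerivAt (fun s => potential D (x + s • ξ))
      (-∑ β ∈ D.Rpos, D.k β * ⟪β, ξ⟫ * Real.exp (-⟪β, x + t • ξ⟫ / 2)) t := by
  refine (HasDerivAt.fun_sum fun β _ => ((((hasDerivAt_inner_add_smul β x ξ t).fun_neg.div_const
    2).exp.const_mul 2).const_mul (D.k β))).congr_deriv ?_
  rw [← Finset.sum_neg_distrib]
  exact Finset.sum_congr rfl fun β _ => by ring

/-- A supersolution of the system satisfied by the functions `gauged D G`, for suitable weights
`c` and a suitable constant `K`. -/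
def barrier (D : HOData V) (c : weylGroup D → ℝ) (K : ℝ) (w : weylGroup D) (x : V) : ℝ :=
  c w * (Real.exp (-(K * potential D x)) * ∏ δ ∈ posSet D w, (1 + ⟪δ, x⟫))

/-- The logarithmic derivative of `barrier D c K w` in the direction `ξ`. -/
def barrierLogDeriv (D : HOData V) (K : ℝ) (w : weylGroup D) (x ξ : V) : ℝ :=
  K * (∑ β ∈ D.Rpos, D.k β * ⟪β, ξ⟫ * Real.exp (-⟪β, x⟫ / 2)) +
    ∑ δ ∈ posSet D w, ⟪δ, ξ⟫ / (1 + ⟪δ, x⟫)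

lemma one_add_inner_pos {x : V} (hx : x ∈ posChamber D) {w : weylGroup D} {δ : V}
    (hδ : δ ∈ posSet D w) : 0 < 1 + ⟪δ, x⟫ :=
  add_pos one_pos (hx δ (Rpos0_subset_Rpos (mem_posSet.1 hδ).1))

lemma barrier_eq_posProd (c : weylGroup D → ℝ) (K : ℝ) (w : weylGroup D) {x : V}
    (hx : x ∈ posChamber D) :
    barrier D c K w x = c w * (Real.exp (-(K * potential D x)) * posProd D (w.1 x)) := by
  rw [barrier, posProd_weyl w hx]

lemma barrier_pos {c : weylGroup D → ℝ} (hc : ∀ w, 0 < c w) (K : ℝ) (w : weylGroup D) {x : V}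
    (hx : x ∈ posChamber D) : 0 < barrier D c K w x :=
  mul_pos (hc w) (mul_pos (Real.exp_pos _) (Finset.prod_pos fun _ => one_add_inner_pos hx))

lemma barrier_le {c : weylGroup D → ℝ} (hc : ∀ w, 0 < c w) {K : ℝ} (hK : 0 ≤ K)
    (w : weylGroup D) {x : V} (hx : x ∈ posChamber D) :
    barrier D c K w x ≤ c w * ∏ α ∈ Rpos0 D, (1 + ⟪α, x⟫) := by
  refine mul_le_mul_of_nonneg_left ((mul_le_of_le_one_left ?_ ?_).trans (prod_posSet_le hx w))
    (hc w).le
  · exact Finset.prod_nonneg fun _ hδ => (one_add_inner_pos hx hδ).le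
  · exact Real.exp_le_one_iff.2 (neg_nonpos.2 (mul_nonneg hK (potential_nonneg x)))

lemma hasDerivAt_barrier (c : weylGroup D → ℝ) (K : ℝ) (w : weylGroup D) {x ξ : V} {t : ℝ}
    (hx : x + t • ξ ∈ posChamber D) :
    HasDerivAt (fun s => barrier D c K w (x + s • ξ))
      (barrier D c K w (x + t • ξ) * barrierLogDeriv D K w (x + t • ξ) ξ) t := by
  have hprod := HasDerivAt.fun_finsetProd (u := posSet D w)
    fun δ _ => (hasDerivAt_inner_add_smul δ x ξ t).const_add 1
  have hlog : ∑ δ ∈ posSet D w, (∏ ε ∈ (posSet D w).erase δ, (1 + ⟪ε, x + t • ξ⟫)) • ⟪δ, ξ⟫ =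
      (∏ δ ∈ posSet D w, (1 + ⟪δ, x + t • ξ⟫)) *
        ∑ δ ∈ posSet D w, ⟪δ, ξ⟫ / (1 + ⟪δ, x + t • ξ⟫) := by
    rw [Finset.mul_sum]
    refine Finset.sum_congr rfl fun δ hδ => ?_
    have := (one_add_inner_pos hx hδ).ne'
    rw [← Finset.mul_prod_erase _ _ hδ, smul_eq_mul]
    field_simp
  rw [hlog] at hprod
  refine ((((hasDerivAt_potential x ξ t).const_mul K).fun_neg.exp.mul hprod).const_mul
    (c w)).congr_deriv ?_
  rw [barrier, barrierLogDeriv]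
  ring

lemma posProd_mul_weylRefl_le {C : ℝ}
    (hC : ∀ α ∈ D.R, ∀ y, posProd D (rRefl α y) ≤ C * Real.exp (|⟪α, y⟫| / 2) * posProd D y)
    {x : V} (hx : x ∈ posChamber D) (w : weylGroup D) {β : V} (hβ : β ∈ D.Rpos) :
    posProd D ((w * D.weylRefl β).1 x) ≤ C * Real.exp (⟪β, x⟫ / 2) * posProd D (w.1 x) := by
  have hβR := D.pos_subset hβ
  simpa only [mul_weylRefl_apply hβR, map_rRefl, w.1.inner_map_map, abs_of_pos (hx β hβ)] using
    hC (w.1 β) ((D.weyl_mem_iff w).2 hβR) (w.1 x)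

lemma bose_mul_barrier_le {c : weylGroup D → ℝ} (hc : ∀ w, 0 < c w) {m C : ℝ}
    (hm : ∀ v w, c v ≤ m * c w)
    (hC : ∀ α ∈ D.R, ∀ y, posProd D (rRefl α y) ≤ C * Real.exp (|⟪α, y⟫| / 2) * posProd D y)
    {x : V} (hx : ∀ α ∈ D.Rpos, 1 ≤ ⟪α, x⟫) (K : ℝ) (w : weylGroup D) {β : V}
    (hβ : β ∈ D.Rpos) :
    bose ⟪β, x⟫ * barrier D c K (w * D.weylRefl β) x ≤
      2 * m * C * Real.exp (-⟪β, x⟫ / 2) * barrier D c K w x := by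
  have hx' : x ∈ posChamber D := fun α hα => one_pos.trans_le (hx α hα)
  have hexp : Real.exp (-⟪β, x⟫) * Real.exp (⟪β, x⟫ / 2) = Real.exp (-⟪β, x⟫ / 2) := by
    rw [← Real.exp_add]
    ring_nf
  rw [barrier_eq_posProd c K _ hx', barrier_eq_posProd c K w hx', ← hexp]
  calc bose ⟪β, x⟫ * (c (w * D.weylRefl β) *
        (Real.exp (-(K * potential D x)) * posProd D ((w * D.weylRefl β).1 x)))
      ≤ 2 * Real.exp (-⟪β, x⟫) * ((m * c w) * (Real.exp (-(K * potential D x)) *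
          (C * Real.exp (⟪β, x⟫ / 2) * posProd D (w.1 x)))) := by
        have hprod := posProd_mul_weylRefl_le hC hx' w hβ
        have hprod_pos := (posProd_pos (D := D) ((w * D.weylRefl β).1 x)).le
        have hmw := (hc (w * D.weylRefl β)).le
        exact mul_le_mul (bose_le (hx β hβ)) (mul_le_mul (hm _ w) (by gcongr) (by positivity)
          (hmw.trans (hm _ w))) (by positivity) (by positivity)
    _ = _ := by ring

lemma mul_barrier_mul_weylRefl_le {c : weylGroup D → ℝ} {η : ℝ} {w : weylGroup D} {x : V}
    (hx : x ∈ posChamber D) {γ : V} (hγ : γ ∈ posSet D w)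
    (hcγ : c (w * D.weylRefl γ) ≤ η * c w) (hcw : 0 ≤ η * c w) (K : ℝ) :
    (1 + ⟪γ, x⟫) * barrier D c K (w * D.weylRefl γ) x ≤ η * barrier D c K w x := by
  obtain ⟨hγ₀, hwγ⟩ := mem_posSet.1 hγ
  have hwγ₀ : w.1 γ ∈ Rpos0 D := by
    simpa only [posRep, if_pos hwγ] using posRep_weyl_mem_Rpos0 w hγ₀
  have hle : (1 + ⟪γ, x⟫) * posProd D ((w * D.weylRefl γ).1 x) ≤ posProd D (w.1 x) := by
    rw [mul_weylRefl_apply (Rpos0_subset hγ₀), map_rRefl, ← w.1.inner_map_map γ x]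
    exact mul_posProd_rRefl_le hwγ₀
      ((w.1.inner_map_map γ x).symm ▸ (hx γ (Rpos0_subset_Rpos hγ₀)).le)
  rw [barrier_eq_posProd c K _ hx, barrier_eq_posProd c K w hx]
  calc (1 + ⟪γ, x⟫) * (c (w * D.weylRefl γ) *
        (Real.exp (-(K * potential D x)) * posProd D ((w * D.weylRefl γ).1 x)))
      = c (w * D.weylRefl γ) * (Real.exp (-(K * potential D x)) *
          ((1 + ⟪γ, x⟫) * posProd D ((w * D.weylRefl γ).1 x))) := by ring
    _ ≤ η * c w * (Real.exp (-(K * potential D x)) * posProd D (w.1 x)) := by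
        have := (mul_pos (one_add_inner_pos hx hγ)
          (posProd_pos (D := D) ((w * D.weylRefl γ).1 x))).le
        gcongr
    _ = _ := by ring

lemma inner_mul_barrier_le {c : weylGroup D → ℝ} (hc : ∀ w, 0 < c w) {η : ℝ} (hη : 0 < η)
    (hcη : ∀ w, ∀ β ∈ D.Rpos, w.1 β ∈ D.Rpos → c (w * D.weylRefl β) ≤ η * c w)
    {x ξ : V} (hx : x ∈ posChamber D) (hξ : ξ ∈ posChamber D) (K : ℝ) {w : weylGroup D} {β : V}
    (hβ : β ∈ D.Rpos) (hw : w.1 β ∈ D.Rpos) :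
    ⟪β, ξ⟫ * barrier D c K (w * D.weylRefl β) x ≤
      2 * η * (barrier D c K w x * ∑ δ ∈ posSet D w, ⟪δ, ξ⟫ / (1 + ⟪δ, x⟫)) := by
  obtain ⟨γ, hγ, hβγ⟩ := exists_mem_posSet hβ hw
  have hγ' := Rpos0_subset_Rpos (mem_posSet.1 hγ).1
  have hγx := one_add_inner_pos hx hγ
  have hH := barrier_pos hc K w hx
  have hinner : ⟪β, ξ⟫ ≤ 2 * ⟪γ, ξ⟫ := by
    rcases hβγ with rfl | rfl
    · linarith [hξ β hβ]
    · rw [real_inner_smul_left]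
  have hrefl : w * D.weylRefl β = w * D.weylRefl γ := by
    ext y
    rw [mul_weylRefl_apply (D.pos_subset hβ), mul_weylRefl_apply (D.pos_subset hγ')]
    rcases hβγ with rfl | rfl
    · rfl
    · rw [rRefl_smul_left two_ne_zero]
  have hle := mul_barrier_mul_weylRefl_le hx hγ (hcη w γ hγ' (mem_posSet.1 hγ).2)
    (mul_pos hη (hc w)).le K
  have hsum : ⟪γ, ξ⟫ / (1 + ⟪γ, x⟫) ≤ ∑ δ ∈ posSet D w, ⟪δ, ξ⟫ / (1 + ⟪δ, x⟫) :=
    Finset.single_le_sum (f := fun δ => ⟪δ, ξ⟫ / (1 + ⟪δ, x⟫)) (fun δ hδ => div_nonneg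
      (hξ δ (Rpos0_subset_Rpos (mem_posSet.1 hδ).1)).le (one_add_inner_pos hx hδ).le) hγ
  rw [hrefl]
  calc ⟪β, ξ⟫ * barrier D c K (w * D.weylRefl γ) x
      ≤ 2 * ⟪γ, ξ⟫ * (η * barrier D c K w x / (1 + ⟪γ, x⟫)) :=
        mul_le_mul hinner ((le_div_iff₀' hγx).2 hle) (barrier_pos hc K _ hx).le
          (by linarith [hξ γ hγ'])
    _ = 2 * η * (barrier D c K w x * (⟪γ, ξ⟫ / (1 + ⟪γ, x⟫))) := by ring
    _ ≤ _ := by gcongr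

lemma transfer_barrier_le {c : weylGroup D → ℝ} (hc : ∀ w, 0 < c w) {η m C : ℝ} (hη : 0 < η)
    (hηk : (∑ β ∈ D.Rpos, D.k β) * (2 * η) ≤ 1)
    (hcη : ∀ w, ∀ β ∈ D.Rpos, w.1 β ∈ D.Rpos → c (w * D.weylRefl β) ≤ η * c w)
    (hm : ∀ v w, c v ≤ m * c w)
    (hC : ∀ α ∈ D.R, ∀ y, posProd D (rRefl α y) ≤ C * Real.exp (|⟪α, y⟫| / 2) * posProd D y)
    {x ξ : V} (hx : ∀ α ∈ D.Rpos, 1 ≤ ⟪α, x⟫) (hξ : ξ ∈ posChamber D) (w : weylGroup D) :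
    transfer D (fun v => barrier D c (2 * m * C) v x) x ξ w ≤
      barrier D c (2 * m * C) w x * barrierLogDeriv D (2 * m * C) w x ξ := by
  have hx' : x ∈ posChamber D := fun α hα => one_pos.trans_le (hx α hα)
  set K := 2 * m * C
  set H := barrier D c K w x
  have hH : 0 < H := barrier_pos hc K w hx'
  set S := ∑ δ ∈ posSet D w, ⟪δ, ξ⟫ / (1 + ⟪δ, x⟫)
  have hS : 0 ≤ S := Finset.sum_nonneg fun δ hδ => div_nonneg
    (hξ δ (Rpos0_subset_Rpos (mem_posSet.1 hδ).1)).le (one_add_inner_pos hx' hδ).le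
  have hterm : ∀ β ∈ D.Rpos,
      D.k β * ⟪β, ξ⟫ * (rate D w β x * barrier D c K (w * D.weylRefl β) x) ≤
        H * K * (D.k β * ⟪β, ξ⟫ * Real.exp (-⟪β, x⟫ / 2)) + D.k β * (2 * η) * (H * S) := by
    intro β hβ
    have hk := (D.k_pos β (D.pos_subset hβ)).le
    have hbose := mul_le_mul_of_nonneg_left (bose_mul_barrier_le hc hm hC hx K w hβ)
      (k_mul_inner_nonneg hξ hβ)
    have hjump : D.k β * (⟪β, ξ⟫ *
        ((if w.1 β ∈ D.Rpos then 1 else 0) * barrier D c K (w * D.weylRefl β) x)) ≤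
          D.k β * (2 * η * (H * S)) := by
      refine mul_le_mul_of_nonneg_left ?_ hk
      split_ifs with hw
      · rw [one_mul]
        exact inner_mul_barrier_le hc hη hcη hx' hξ K hβ hw
      · rw [zero_mul, mul_zero]
        positivity
    rw [rate]
    linarith
  calc transfer D (fun v => barrier D c K v x) x ξ w
      ≤ ∑ β ∈ D.Rpos, (H * K * (D.k β * ⟪β, ξ⟫ * Real.exp (-⟪β, x⟫ / 2)) +
          D.k β * (2 * η) * (H * S)) := Finset.sum_le_sum hterm
    _ = H * K * (∑ β ∈ D.Rpos, D.k β * ⟪β, ξ⟫ * Real.exp (-⟪β, x⟫ / 2)) +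
          (∑ β ∈ D.Rpos, D.k β) * (2 * η) * (H * S) := by
        rw [Finset.sum_add_distrib, ← Finset.mul_sum, ← Finset.sum_mul, ← Finset.sum_mul]
    _ ≤ H * K * (∑ β ∈ D.Rpos, D.k β * ⟪β, ξ⟫ * Real.exp (-⟪β, x⟫ / 2)) + 1 * (H * S) := by
        gcongr
    _ = H * barrierLogDeriv D K w x ξ := by
        rw [barrierLogDeriv]
        ring

variable (D) in
theorem exists_barrier [Finite (weylGroup D)] :
    ∃ (c : weylGroup D → ℝ) (K : ℝ), (∀ w, 0 < c w) ∧ 0 ≤ K ∧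
      ∀ x, (∀ α ∈ D.Rpos, 1 ≤ ⟪α, x⟫) → ∀ ξ ∈ posChamber D, ∀ w,
        transfer D (fun v => barrier D c K v x) x ξ w ≤
          barrier D c K w x * barrierLogDeriv D K w x ξ := by
  set κ := ∑ β ∈ D.Rpos, D.k β
  have hκ : 0 ≤ κ := Finset.sum_nonneg fun β hβ => (D.k_pos β (D.pos_subset hβ)).le
  obtain ⟨c, hc, hcη⟩ := D.exists_weyl_weight (η := (2 * κ + 1)⁻¹) (by positivity)
    (inv_le_one_of_one_le₀ (by linarith))
  obtain ⟨v₀, hv₀⟩ := Finite.exists_max c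
  obtain ⟨w₀, hw₀⟩ := Finite.exists_min c
  obtain ⟨C, hC, hCle⟩ := D.exists_posProd_rRefl_le
  have hv₀_pos := hc v₀
  have hw₀_pos := hc w₀
  have hm : ∀ v w, c v ≤ c v₀ / c w₀ * c w := fun v w => by
    rw [div_mul_eq_mul_div, le_div_iff₀ hw₀_pos]
    exact mul_le_mul (hv₀ v) (hw₀ w) hw₀_pos.le hv₀_pos.le
  have hηk : κ * (2 * (2 * κ + 1)⁻¹) ≤ 1 := by
    rw [← mul_assoc, ← div_eq_mul_inv, div_le_one (by positivity)]
    linarith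
  exact ⟨c, 2 * (c v₀ / c w₀) * C, hc, by positivity, fun x hx ξ hξ w =>
    transfer_barrier_le hc (by positivity) hηk hcη hm hCle hx hξ w⟩

end Supersolution

section UpperBound

variable {D : HOData V} {G : V → ℝ}

lemma transfer_sub (f g : weylGroup D → ℝ) (x ξ : V) (w : weylGroup D) :
    transfer D (fun v => f v - g v) x ξ w = transfer D f x ξ w - transfer D g x ξ w := by
  simp only [transfer, mul_sub, Finset.sum_sub_distrib]

lemma IsCherednikSolution.gauged_le_mul_barrier [Finite (weylGroup D)]
    (hG : IsCherednikSolution D G) {c : weylGroup D → ℝ} {K C : ℝ} {x ξ : V}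
    (hx : x ∈ posChamber D) (hξ : ξ ∈ posChamber D) (hC : 0 ≤ C)
    (hsuper : ∀ t ∈ Set.Icc (0 : ℝ) 1, ∀ w,
      transfer D (fun v => barrier D c K v (x + t • ξ)) (x + t • ξ) ξ w ≤
        barrier D c K w (x + t • ξ) * barrierLogDeriv D K w (x + t • ξ) ξ)
    (hinit : ∀ w, gauged D G w x < C * barrier D c K w x) (w : weylGroup D) :
    gauged D G w (x + ξ) ≤ C * barrier D c K w (x + ξ) := by
  have hmem : ∀ t ∈ Set.Icc (0 : ℝ) 1, x + t • ξ ∈ posChamber D := fun t ht =>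
    add_smul_mem_posChamber hx hξ ht.1
  have h := forall_pos_of_hasDerivAt_nonneg
    (d := fun w t => C * barrier D c K w (x + t • ξ) - gauged D G w (x + t • ξ))
    (fun w t ht => ((hasDerivAt_barrier c K w (hmem t ht)).const_mul C).sub
      (hG.hasDerivAt_gauged w (hmem t ht)))
    (fun t ht hnonneg w => ?_) (by simpa using hinit) 1 ⟨zero_le_one, le_rfl⟩ w
  · simpa using h.le
  · refine (transfer_nonneg hnonneg (hmem t ht) hξ w).trans ?_
    rw [transfer_sub, transfer_const_mul]
    exact sub_le_sub_right (mul_le_mul_of_nonneg_left (hsuper t ht w) hC) _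

theorem IsCherednikSolution.exists_gauged_le [Finite (weylGroup D)]
    (hG : IsCherednikSolution D G) {u : V} (hu : ∀ α ∈ D.Rpos, 1 ≤ ⟪α, u⟫) :
    ∃ C > 0, ∀ x ∈ posChamber D, ∀ w,
      gauged D G w (u + x) ≤ C * ∏ α ∈ Rpos0 D, (1 + ⟪α, u + x⟫) := by
  have hu' : u ∈ posChamber D := fun α hα => one_pos.trans_le (hu α hα)
  obtain ⟨c, K, hc, hK, hsuper⟩ := D.exists_barrier
  obtain ⟨v₀, hv₀⟩ := Finite.exists_max c
  obtain ⟨w₀, hw₀⟩ := Finite.exists_max fun w => gauged D G w u / barrier D c K w u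
  set C := gauged D G w₀ u / barrier D c K w₀ u + 1
  have hC : 0 < C := add_pos (div_pos (hG.gauged_pos hu' w₀) (barrier_pos hc K w₀ hu')) one_pos
  refine ⟨C * c v₀, mul_pos hC (hc v₀), fun x hx w => ?_⟩
  have hux := add_mem_posChamber hu' hx
  have hle := hG.gauged_le_mul_barrier hu' hx hC.le (fun t ht => hsuper _ (fun α hα => ?_) x hx)
    (fun v => (div_lt_iff₀ (barrier_pos hc K v hu')).1 ((hw₀ v).trans_lt (lt_add_one _))) w
  · rw [mul_assoc]
    refine hle.trans (mul_le_mul_of_nonneg_left ((barrier_le hc hK w hux).trans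
      (mul_le_mul_of_nonneg_right (hv₀ w) (Finset.prod_nonneg fun α hα => ?_))) hC.le)
    linarith [hux α (Rpos0_subset_Rpos hα)]
  · rw [inner_add_right, real_inner_smul_right]
    linarith [hu α hα, mul_nonneg ht.1 (hx α hα).le]

lemma prod_one_add_inner_add_le {x y : V} (hx : x ∈ posChamber D) (hy : y ∈ posChamber D) :
    ∏ α ∈ Rpos0 D, (1 + ⟪α, x + y⟫) ≤
      (∏ α ∈ Rpos0 D, (1 + ⟪α, x⟫)) * ∏ α ∈ Rpos0 D, (1 + ⟪α, y⟫) := by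
  rw [← Finset.prod_mul_distrib]
  refine Finset.prod_le_prod (fun α hα => ?_) fun α hα => ?_
  · linarith [add_mem_posChamber hx hy α (Rpos0_subset_Rpos hα)]
  · rw [inner_add_right]
    linarith [mul_pos (hx α (Rpos0_subset_Rpos hα)) (hy α (Rpos0_subset_Rpos hα))]

theorem IsCherednikSolution.exists_upper_bound [Fintype (weylGroup D)]
    (hG : IsCherednikSolution D G) :
    ∃ C > 0, ∀ x ∈ posChamber D,
      ∑ w, tilted D G w x ≤ C * ∏ α ∈ Rpos0 D, (1 + ⟪α, x⟫) := by
  obtain ⟨u, hu⟩ := D.exists_one_le_inner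
  have hu' : u ∈ posChamber D := fun α hα => one_pos.trans_le (hu α hα)
  obtain ⟨C, hC, hgauged⟩ := hG.exists_gauged_le hu
  set Q := ∏ α ∈ Rpos0 D, (1 + ⟪α, u⟫)
  have hQ : 0 < Q := Finset.prod_pos fun α hα => by linarith [hu' α (Rpos0_subset_Rpos hα)]
  have hdenom : 0 < weylDenom D u := weylDenom_pos u
  refine ⟨Fintype.card (weylGroup D) * ((weylDenom D u)⁻¹ * C * Q), by positivity,
    fun x hx => ?_⟩
  have hle (w : weylGroup D) :
      tilted D G w (u + x) ≤ (weylDenom D u)⁻¹ * C * Q * ∏ α ∈ Rpos0 D, (1 + ⟪α, x⟫) := by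
    rw [mul_assoc, mul_assoc, le_inv_mul_iff₀ hdenom]
    calc weylDenom D u * tilted D G w (u + x)
        ≤ gauged D G w (u + x) := mul_le_mul_of_nonneg_right (weylDenom_le_add hu' hx)
          (hG.tilted_pos (add_mem_posChamber hu' hx) w).le
      _ ≤ C * ∏ α ∈ Rpos0 D, (1 + ⟪α, u + x⟫) := hgauged x hx w
      _ ≤ _ := mul_le_mul_of_nonneg_left (prod_one_add_inner_add_le hu' hx) hC.le
  calc ∑ w, tilted D G w x ≤ ∑ w, tilted D G w (u + x) :=
        add_comm x u ▸ hG.sum_tilted_le_add hx hu'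
    _ ≤ ∑ _w : weylGroup D, (weylDenom D u)⁻¹ * C * Q * ∏ α ∈ Rpos0 D, (1 + ⟪α, x⟫) :=
        Finset.sum_le_sum fun w _ => hle w
    _ = _ := by rw [Finset.sum_const, nsmul_eq_mul, Finset.card_univ, ← mul_assoc]

end UpperBound

section Symmetrization

variable {D : HOData V} {G : V → ℝ} [Fintype (weylGroup D)]

lemma Fsym_eq_sum_tilted (G : V → ℝ) (x : V) :
    Fsym D G x = (Fintype.card (weylGroup D) : ℝ)⁻¹ * Real.exp (-⟪rhoHO D, x⟫) *
      ∑ w, tilted D G w x := by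
  simp only [Fsym, tilted, ← Finset.mul_sum]
  rw [mul_assoc, ← mul_assoc (Real.exp _), ← Real.exp_add, neg_add_cancel, Real.exp_zero, one_mul]

lemma IsCherednikSolution.continuous_Fsym (hG : IsCherednikSolution D G) :
    Continuous (Fsym D G) :=
  continuous_const.mul (continuous_finsetSum _ fun w _ => hG.continuous.comp w.1.continuous)

theorem IsCherednikSolution.exists_Fsym_bounds (hG : IsCherednikSolution D G) :
    ∃ C c : ℝ, 0 < c ∧ c ≤ C ∧ ∀ x ∈ posChamber D,
      c * (Real.exp (-⟪rhoHO D, x⟫) * ∏ α ∈ Rpos0 D, (1 + ⟪α, x⟫)) ≤ Fsym D G x ∧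
      Fsym D G x ≤ C * (Real.exp (-⟪rhoHO D, x⟫) * ∏ α ∈ Rpos0 D, (1 + ⟪α, x⟫)) := by
  obtain ⟨c, hc, hlower⟩ := hG.exists_lower_bound
  obtain ⟨C, -, hupper⟩ := hG.exists_upper_bound
  set n := (Fintype.card (weylGroup D) : ℝ)⁻¹ with hn_def
  have hn : 0 < n := inv_pos.2 (Nat.cast_pos.2 Fintype.card_pos)
  refine ⟨n * max C c, n * c, mul_pos hn hc,
    mul_le_mul_of_nonneg_left (le_max_right _ _) hn.le, fun x hx => ?_⟩
  have hprod : 0 ≤ ∏ α ∈ Rpos0 D, (1 + ⟪α, x⟫) := Finset.prod_nonneg fun α hα => by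
    linarith [hx α (Rpos0_subset_Rpos hα)]
  have hupper' := (hupper x hx).trans (mul_le_mul_of_nonneg_right (le_max_left C c) hprod)
  have hscale : 0 ≤ n * Real.exp (-⟪rhoHO D, x⟫) := by positivity
  rw [Fsym_eq_sum_tilted, ← hn_def]
  constructor
  · linarith [mul_le_mul_of_nonneg_left (hlower x hx) hscale]
  · linarith [mul_le_mul_of_nonneg_left hupper' hscale]

end Symmetrization

end HOData

lemma IsOpdamR.isCherednikSolution {D : HOData V} {G : V → ℝ} (hG : IsOpdamR D 0 G) :
    D.IsCherednikSolution G where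
  continuous := continuousOn_univ.1 hG.1.continuousOn
  pos_zero := hG.2.1.symm ▸ one_pos
  hasLineDerivAt x hx ξ := by
    have h := (hG.1 x trivial).differentiableAt.hasFDerivAt.hasLineDerivAt ξ
    rwa [hG.2.2 ξ x hx, add_zero] at h

theorem statement6_general (D : HOData V) [Fintype (weylGroup D)] {G : V → ℝ}
    (hG : D.IsCherednikSolution G) :
    ∃ C c : ℝ, 0 < c ∧ c ≤ C ∧ ∀ x ∈ closure (posChamber D),
      c * (Real.exp (-⟪rhoHO D, x⟫) * ∏ α ∈ Rpos0 D, (1 + ⟪α, x⟫)) ≤ Fsym D G x ∧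
      Fsym D G x ≤ C * (Real.exp (-⟪rhoHO D, x⟫) * ∏ α ∈ Rpos0 D, (1 + ⟪α, x⟫)) := by
  obtain ⟨C, c, hc, hcC, hbounds⟩ := hG.exists_Fsym_bounds
  have hF := hG.continuous_Fsym
  have hP : Continuous fun x => Real.exp (-⟪rhoHO D, x⟫) * ∏ α ∈ Rpos0 D, (1 + ⟪α, x⟫) := by
    fun_prop
  exact ⟨C, c, hc, hcC, fun x hx => closure_minimal hbounds
    ((isClosed_le (hP.const_mul c) hF).inter (isClosed_le hF (hP.const_mul C))) hx⟩

/-- sharp global estimate of `F₀` on the closed positive Weyl chamber: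
`F₀(x) ≍ e^{-(ρ,x)} Π_{α ∈ R₀⁺} (1 + (α,x))`. -/
theorem statement6 (D : HOData E) [Fintype (weylGroup D)] (Gzero : E → ℝ)
    (hG0 : IsOpdamR D 0 Gzero) :
    ∃ C c : ℝ, 0 < c ∧ c ≤ C ∧ ∀ x ∈ closure (posChamber D),
      c * (Real.exp (-⟪rhoHO D, x⟫) * ∏ α ∈ Rpos0 D, (1 + ⟪α, x⟫)) ≤ Fsym D Gzero x ∧
      Fsym D Gzero x ≤ C * (Real.exp (-⟪rhoHO D, x⟫) * ∏ α ∈ Rpos0 D, (1 + ⟪α, x⟫)) := by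
  exact statement6_general D hG0.isCherednikSolution
end
end
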